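/- arXiv:1607.01206 — 7 statements merged into one kernel-verified Lean document; each statement's English description precedes it below -/
import Mathlib

section
/- Let M be a weight sequence with M_k = μ_0 μ_1 ⋯ μ_k. Then the following conditions are equivalent: (0) there exists C ≥ 1 such that m_{j+k} ≤ C^{j+k} m_j m_k for all j, k ∈ ℕ; (1) there exists C ≥ 1 such that M_{j+k} ≤ C^{j+k} M_j M_k for all j, k ∈ ℕ; (2) μ_k ≲ M_k^{1/k}; (3) μ_{2k} ≲ μ_k; (4) there exists C ≥ 1 such that 2Σ_M(t) ≤ Σ_M(Ct) for all t > 0; (5) there exists C ≥ 1 such that 2ω_M(t) ≤ ω_M(Ct) + C for all t ≥ 0. -/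
/-!
Write `Σ` for `SigmaM μ` and `ω` for `omegaM μ`. Since `M k ^ (1 / k) ≤ μ k`, the sequence `μ` is
unbounded, so on each interval `(0, t]` the function `Σ(u) / u` is a finite sum of the functions
`u ↦ 1_{μ i ≤ u} / u`, whence `ω(t) = ∑ i ≥ 1, log⁺ (t / μ i)` (`omegaM_eq_sum`). Consequently
`ω(t)` is the maximum over `k` of `k log t - log (M k)` (`le_omegaM`), attained at any `k` with
`μ k ≤ t ≤ μ (k + 1)` (`omegaM_eq`).

* Factorials play no role, because `1 ≤ (j + k)! / (j! k!) ≤ 2 ^ (j + k)`.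
* If `M (2 k) ≤ C ^ (2 k) M k ^ 2`, then `μ k ^ k ≤ M (2 k) / M k` yields `μ k ≤ C² M k ^ (1 / k)`;
  this in turn gives `μ (2 k) ^ (2 k) ≤ C ^ (2 k) M (2 k) ≤ C ^ (2 k) μ k ^ k μ (2 k) ^ k`, that is,
  `μ (2 k) ≤ C² μ k`.
* If `μ (2 k) ≤ C μ k`, then splitting off the last factor `μ (j + k) ≤ μ (2 max(j, k))` of
  `M (j + k)` proves moderate growth by induction on `j + k`.
* `μ (2 k) ≤ C μ k` and `2 Σ(t) ≤ Σ(C t)` say the same thing, as `μ k ≤ t ↔ k ≤ Σ(t)` for `k ≥ 1`.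
* The condition on `ω` is the translation of moderate growth of `M` through the description of `ω`
  as a maximum.
-/

open Filter

/-- The counting function `Σ_M(t) = |{k ≥ 1 : μ_k ≤ t}|` of a weight sequence with
quotient sequence `μ`. -/
noncomputable def SigmaM (μ : ℕ → ℝ) (t : ℝ) : ℝ :=
  (Set.ncard {k : ℕ | 1 ≤ k ∧ μ k ≤ t} : ℝ)

/-- `ω_M(t) = ∫_0^t Σ_M(u)/u du`. -/
noncomputable def omegaM (μ : ℕ → ℝ) (t : ℝ) : ℝ :=
  ∫ u in (0:ℝ)..t, SigmaM μ u / u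

open Finset in
/-- The indices counted by `Σ_M(t)` form an initial segment `{1, …, n}`. -/
theorem exists_SigmaM_eq {μ : ℕ → ℝ} (hmono : Monotone μ) (hunb : ∀ t, ∃ n, t < μ n) (t : ℝ) :
    ∃ n : ℕ, SigmaM μ t = n ∧ ∀ k, 1 ≤ k → (μ k ≤ t ↔ k ≤ n) := by
  classical
  have hex : ∃ n, t < μ (n + 1) := by
    obtain ⟨n, hn⟩ := hunb t
    exact ⟨n, hn.trans_le (hmono n.le_succ)⟩
  have key : ∀ k, 1 ≤ k → (μ k ≤ t ↔ k ≤ Nat.find hex) := by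
    intro k hk
    constructor
    · intro h
      by_contra! hlt
      have := Nat.find_spec hex
      have h2 := hmono (show Nat.find hex + 1 ≤ k from hlt)
      linarith
    · intro h
      have := Nat.find_min hex (show k - 1 < Nat.find hex by omega)
      rw [Nat.sub_add_cancel hk] at this
      exact not_lt.1 this
  refine ⟨Nat.find hex, ?_, key⟩
  have : {k : ℕ | 1 ≤ k ∧ μ k ≤ t} = (Icc 1 (Nat.find hex) : Finset ℕ) := by
    ext k
    simp only [Set.mem_ofPred_eq, coe_Icc, Set.mem_Icc]
    exact and_congr_right fun hk => key k hk
  rw [SigmaM, this, Set.ncard_coe_finset]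
  simp

theorem integrableOn_indicator_inv {a : ℝ} (ha : 0 < a) (t : ℝ) :
    MeasureTheory.IntegrableOn ((Set.Ici a).indicator fun u : ℝ => u⁻¹) (Set.Ioc 0 t) := by
  rw [MeasureTheory.integrableOn_indicator_iff measurableSet_Ici]
  have h : MeasureTheory.IntegrableOn (fun u : ℝ => u⁻¹) (Set.Icc a t) := by
    apply ContinuousOn.integrableOn_Icc
    exact continuousOn_inv₀.mono fun x hx => (ha.trans_le hx.1).ne'
  exact h.mono_set fun x hx => ⟨hx.1, hx.2.2⟩

theorem integral_indicator_inv {a : ℝ} (ha : 0 < a) {t : ℝ} (ht : 0 ≤ t) :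
    ∫ u in (0:ℝ)..t, (Set.Ici a).indicator (fun u : ℝ => u⁻¹) u = Real.posLog (t / a) := by
  rw [intervalIntegral.integral_of_le ht, MeasureTheory.setIntegral_indicator measurableSet_Ici]
  have hs : Set.Ioc 0 t ∩ Set.Ici a = Set.Icc a t := by
    ext x
    simp only [Set.mem_inter_iff, Set.mem_Ioc, Set.mem_Ici, Set.mem_Icc]
    exact ⟨fun h => ⟨h.2, h.1.2⟩, fun h => ⟨⟨ha.trans_le h.1, h.2⟩, h.1⟩⟩
  rw [hs, MeasureTheory.integral_Icc_eq_integral_Ioc]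
  rcases le_or_gt a t with h | h
  · rw [← intervalIntegral.integral_of_le h, integral_inv_of_pos ha (ha.trans_le h),
      Real.posLog_eq_log]
    rw [abs_of_nonneg (by positivity), le_div_iff₀ ha]
    linarith
  · rw [Set.Ioc_eq_empty (by linarith)]
    have : Real.posLog (t / a) = 0 := by
      rw [Real.posLog_eq_zero_iff, abs_of_nonneg (by positivity), div_le_one ha]
      exact h.le
    simp [this]

open Finset in
/-- `ω_M(t) = ∑_{i ≥ 1} log⁺ (t / μ i)`, the sum being truncated at any `N` beyond which all terms
vanish. -/
theorem omegaM_eq_sum {μ : ℕ → ℝ} (hpos : ∀ k, 0 < μ k) {t : ℝ} (ht : 0 ≤ t) {N : ℕ}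
    (hN : ∀ i, N < i → t < μ i) :
    omegaM μ t = ∑ i ∈ Icc 1 N, Real.posLog (t / μ i) := by
  classical
  have hcongr : ∀ u ∈ Set.Ioc 0 t, SigmaM μ u / u =
      ∑ i ∈ Icc 1 N, (Set.Ici (μ i)).indicator (fun u : ℝ => u⁻¹) u := by
    intro u hu
    have hs : {k : ℕ | 1 ≤ k ∧ μ k ≤ u} = ((Icc 1 N).filter fun i => μ i ≤ u : Finset ℕ) := by
      ext k
      simp only [Set.mem_ofPred_eq, coe_filter, mem_Icc]
      constructor
      · rintro ⟨h1, h2⟩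
        refine ⟨⟨h1, ?_⟩, h2⟩
        by_contra! h
        have := hN k h
        linarith [hu.2]
      · rintro ⟨⟨h1, _⟩, h2⟩
        exact ⟨h1, h2⟩
    rw [SigmaM, hs, Set.ncard_coe_finset]
    simp only [Set.indicator_apply, Set.mem_Ici]
    rw [← Finset.sum_filter, Finset.sum_const, nsmul_eq_mul, div_eq_mul_inv]
  rw [omegaM, intervalIntegral.integral_of_le ht,
    MeasureTheory.setIntegral_congr_fun measurableSet_Ioc hcongr,
    MeasureTheory.integral_finsetSum _ fun i _ => integrableOn_indicator_inv (hpos i) t]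
  refine Finset.sum_congr rfl fun i _ => ?_
  rw [← intervalIntegral.integral_of_le ht, integral_indicator_inv (hpos i) ht]

open Finset in
theorem mul_log_sub_log_eq_sum {μ M : ℕ → ℝ} (hpos : ∀ k, 0 < μ k) (hM0 : M 0 = 1)
    (hMs : ∀ k, M (k + 1) = M k * μ (k + 1)) (hMp : ∀ k, 0 < M k) {t : ℝ} (ht : 0 < t) (k : ℕ) :
    k * Real.log t - Real.log (M k) = ∑ i ∈ Icc 1 k, Real.log (t / μ i) := by
  induction k with
  | zero => simp [hM0]
  | succ k ih =>
    rw [Finset.sum_Icc_succ_top (by omega), ← ih, hMs, Real.log_mul (hMp k).ne' (hpos _).ne',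
      Real.log_div ht.ne' (hpos _).ne']
    push_cast
    ring

theorem exists_cutoff {μ : ℕ → ℝ} (hmono : Monotone μ) (hunb : ∀ t, ∃ n, t < μ n) (t : ℝ) (k : ℕ) :
    ∃ N, k ≤ N ∧ ∀ i, N < i → t < μ i := by
  obtain ⟨n, hn⟩ := hunb t
  exact ⟨max k n, le_max_left _ _, fun i hi =>
    hn.trans_le (hmono ((le_max_right k n).trans hi.le))⟩

open Finset in
/-- Lower bound for `ω_M`: discard all but the first `k` terms of its series and use `log ≤ log⁺`. -/
theorem le_omegaM {μ M : ℕ → ℝ} (hpos : ∀ k, 0 < μ k) (hmono : Monotone μ)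
    (hunb : ∀ t, ∃ n, t < μ n) (hM0 : M 0 = 1)
    (hMs : ∀ k, M (k + 1) = M k * μ (k + 1)) (hMp : ∀ k, 0 < M k) {t : ℝ} (ht : 0 < t) (k : ℕ) :
    k * Real.log t - Real.log (M k) ≤ omegaM μ t := by
  obtain ⟨N, hkN, hN⟩ := exists_cutoff hmono hunb t k
  rw [omegaM_eq_sum hpos ht.le hN, mul_log_sub_log_eq_sum hpos hM0 hMs hMp ht]
  calc ∑ i ∈ Icc 1 k, Real.log (t / μ i)
      ≤ ∑ i ∈ Icc 1 k, Real.posLog (t / μ i) :=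
        Finset.sum_le_sum fun i _ => le_max_right _ _
    _ ≤ _ := Finset.sum_le_sum_of_subset_of_nonneg (Icc_subset_Icc_right hkN)
        fun i _ _ => Real.posLog_nonneg

open Finset in
/-- If `n` separates the quotients `μ i ≤ t` from the quotients `μ i ≥ t`, the lower bound
`le_omegaM` is attained at `n`. Ties `μ i = t` may lie on either side of `n`. -/
theorem omegaM_eq {μ M : ℕ → ℝ} (hpos : ∀ k, 0 < μ k) (hmono : Monotone μ)
    (hunb : ∀ t, ∃ n, t < μ n) (hM0 : M 0 = 1)
    (hMs : ∀ k, M (k + 1) = M k * μ (k + 1)) (hMp : ∀ k, 0 < M k) {t : ℝ} (ht : 0 < t) {n : ℕ}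
    (h1 : ∀ i, 1 ≤ i → i ≤ n → μ i ≤ t) (h2 : ∀ i, n < i → t ≤ μ i) :
    omegaM μ t = n * Real.log t - Real.log (M n) := by
  obtain ⟨N, hkN, hN⟩ := exists_cutoff hmono hunb t n
  rw [omegaM_eq_sum hpos ht.le hN, mul_log_sub_log_eq_sum hpos hM0 hMs hMp ht]
  rw [← Finset.sum_subset (Icc_subset_Icc_right hkN : Icc 1 n ⊆ Icc 1 N)]
  · refine Finset.sum_congr rfl fun i hi => Real.posLog_eq_log ?_
    have := hpos i
    rw [mem_Icc] at hi
    rw [abs_of_nonneg (by positivity), one_le_div this]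
    exact h1 i hi.1 hi.2
  · intro i hi hi'
    have := hpos i
    rw [mem_Icc] at hi hi'
    rw [Real.posLog_eq_zero_iff, abs_of_nonneg (by positivity), div_le_one this]
    exact h2 i (by omega)

/-- Lemma 2.2: characterizations of moderate growth of a weight sequence. -/
theorem stmt_0 (μ M : ℕ → ℝ)
    (hpos : ∀ k, 0 < μ k) (hmono : Monotone μ) (hμ0 : μ 0 = 1)
    (hM : ∀ k, M k = ∏ i ∈ Finset.range (k + 1), μ i)
    (hws : Tendsto (fun k : ℕ => (M k) ^ (1 / (k : ℝ))) atTop atTop) :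
    List.TFAE
      [ ∃ C : ℝ, 1 ≤ C ∧ ∀ j k : ℕ,
          M (j + k) / (Nat.factorial (j + k) : ℝ) ≤
            C ^ (j + k) * (M j / (Nat.factorial j : ℝ)) * (M k / (Nat.factorial k : ℝ)),
        ∃ C : ℝ, 1 ≤ C ∧ ∀ j k : ℕ, M (j + k) ≤ C ^ (j + k) * M j * M k,
        ∃ C : ℝ, 0 < C ∧ ∀ k : ℕ, 1 ≤ k → μ k ≤ C * (M k) ^ (1 / (k : ℝ)),
        ∃ C : ℝ, 0 < C ∧ ∀ k : ℕ, μ (2 * k) ≤ C * μ k,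
        ∃ C : ℝ, 1 ≤ C ∧ ∀ t : ℝ, 0 < t → 2 * SigmaM μ t ≤ SigmaM μ (C * t),
        ∃ C : ℝ, 1 ≤ C ∧ ∀ t : ℝ, 0 ≤ t → 2 * omegaM μ t ≤ omegaM μ (C * t) + C ] := by
  have hM0 : M 0 = 1 := by simp [hM, hμ0]
  have hMs : ∀ k, M (k + 1) = M k * μ (k + 1) := fun k => by
    rw [hM, hM, Finset.prod_range_succ]
  have hMp : ∀ k, 0 < M k := fun k => by
    rw [hM]
    exact Finset.prod_pos fun i _ => hpos i
  have hMle : ∀ k, M k ≤ μ k ^ k := by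
    intro k
    induction k with
    | zero => simp [hM0]
    | succ k ih =>
      rw [hMs, pow_succ]
      have : μ k ^ k ≤ μ (k + 1) ^ k := pow_le_pow_left₀ (hpos k).le (hmono k.le_succ) k
      exact mul_le_mul_of_nonneg_right (ih.trans this) (hpos _).le
  have hroot : ∀ k : ℕ, 1 ≤ k → ((M k) ^ (1 / (k : ℝ))) ^ k = M k := fun k hk => by
    rw [one_div, Real.rpow_inv_natCast_pow (hMp k).le (by omega)]
  have hunb : ∀ t, ∃ n, t < μ n := by
    intro t
    obtain ⟨n, hn, hn1⟩ :=
      ((hws.eventually_gt_atTop t).and (eventually_ge_atTop 1)).exists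
    refine ⟨n, hn.trans_le ?_⟩
    refine le_of_pow_le_pow_left₀ (n := n) (by omega) (hpos n).le ?_
    rw [hroot n hn1]
    exact hMle n
  -- Bounds for the products `μ (k + 1) ⋯ μ (k + j) = M (k + j) / M k`.
  have hlow : ∀ k j, μ k ^ j * M k ≤ M (k + j) := by
    intro k j
    induction j with
    | zero => simp
    | succ j ih =>
      rw [← add_assoc, hMs, pow_succ]
      have h1 : μ k ≤ μ (k + j + 1) := hmono (by omega)
      calc μ k ^ j * μ k * M k = (μ k ^ j * M k) * μ k := by ring
        _ ≤ _ := mul_le_mul ih h1 (hpos k).le (hMp _).le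
  have hup : ∀ k j, M (k + j) ≤ μ (k + j) ^ j * M k := by
    intro k j
    induction j with
    | zero => simp
    | succ j ih =>
      rw [← add_assoc, hMs, pow_succ]
      have h1 : μ (k + j) ^ j ≤ μ (k + j + 1) ^ j :=
        pow_le_pow_left₀ (hpos _).le (hmono (by omega)) j
      calc M (k + j) * μ (k + j + 1) ≤ (μ (k + j) ^ j * M k) * μ (k + j + 1) :=
            mul_le_mul_of_nonneg_right ih (hpos _).le
        _ ≤ (μ (k + j + 1) ^ j * M k) * μ (k + j + 1) :=
            mul_le_mul_of_nonneg_right (mul_le_mul_of_nonneg_right h1 (hMp k).le) (hpos _).le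
        _ = _ := by ring
  tfae_have 1 → 2 := by
    rintro ⟨C, hC, h⟩
    refine ⟨2 * C, by linarith, fun j k => ?_⟩
    have h1 := h j k
    have hch : ((j + k).choose j : ℝ) * j.factorial * k.factorial = (j + k).factorial := by
      rw [Nat.choose_symm_add]
      exact_mod_cast Nat.add_choose_mul_factorial_mul_factorial j k
    have hle : ((j + k).choose j : ℝ) ≤ 2 ^ (j + k) := by
      exact_mod_cast Nat.choose_le_two_pow (j + k) j
    have hj : (0 : ℝ) < j.factorial := by positivity
    have hk : (0 : ℝ) < k.factorial := by positivity
    rw [div_le_iff₀ (by positivity), ← hch] at h1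
    have hMj := hMp j
    have hMk := hMp k
    calc M (j + k) ≤ _ := h1
      _ = (j + k).choose j * (C ^ (j + k) * M j * M k) := by field_simp
      _ ≤ 2 ^ (j + k) * (C ^ (j + k) * M j * M k) :=
          mul_le_mul_of_nonneg_right hle (by positivity)
      _ = _ := by rw [mul_pow]; ring
  tfae_have 2 → 1 := by
    rintro ⟨C, hC, h⟩
    refine ⟨C, hC, fun j k => ?_⟩
    have hle : (j.factorial * k.factorial : ℝ) ≤ (j + k).factorial := by
      exact_mod_cast Nat.le_of_dvd (Nat.factorial_pos _)
        (Nat.factorial_mul_factorial_dvd_factorial_add j k)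
    have hMj := hMp j
    have hMk := hMp k
    calc M (j + k) / (j + k).factorial
        ≤ (C ^ (j + k) * M j * M k) / (j.factorial * k.factorial) :=
          div_le_div₀ (by positivity) (h j k) (by positivity) hle
      _ = _ := by field_simp
  tfae_have 2 → 3 := by
    rintro ⟨C, hC, h⟩
    refine ⟨C ^ 2, by positivity, fun k hk => ?_⟩
    have hMk := hMp k
    refine le_of_pow_le_pow_left₀ (n := k) (by omega) (by positivity) ?_
    rw [mul_pow, hroot k hk]
    have h1 := (hlow k k).trans (h k k)
    have h2 : μ k ^ k ≤ C ^ (k + k) * M k := le_of_mul_le_mul_right h1 hMk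
    calc _ ≤ _ := h2
      _ = _ := by rw [← pow_mul]; ring
  tfae_have 3 → 4 := by
    rintro ⟨C, hC, h⟩
    refine ⟨max 1 (C ^ 2), by positivity, fun k => ?_⟩
    rcases Nat.eq_zero_or_pos k with rfl | hk
    · simp [hμ0]
    have hμk := hpos k
    have hμ2k := hpos (2 * k)
    suffices hs : μ (2 * k) ≤ C ^ 2 * μ k from
      hs.trans (mul_le_mul_of_nonneg_right (le_max_right _ _) hμk.le)
    refine le_of_pow_le_pow_left₀ (n := k) (by omega) (by positivity) ?_
    have h1 : μ (2 * k) ^ (2 * k) ≤ C ^ (2 * k) * M (2 * k) := by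
      have := pow_le_pow_left₀ hμ2k.le (h (2 * k) (by omega)) (2 * k)
      rwa [mul_pow, hroot (2 * k) (by omega)] at this
    have h2 : M (2 * k) ≤ μ (2 * k) ^ k * μ k ^ k := by
      have := hup k k
      rw [← two_mul] at this
      exact this.trans (mul_le_mul_of_nonneg_left (hMle k) (by positivity))
    refine le_of_mul_le_mul_right ?_ (pow_pos hμ2k k)
    calc μ (2 * k) ^ k * μ (2 * k) ^ k = μ (2 * k) ^ (2 * k) := by ring
      _ ≤ C ^ (2 * k) * M (2 * k) := h1
      _ ≤ C ^ (2 * k) * (μ (2 * k) ^ k * μ k ^ k) :=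
          mul_le_mul_of_nonneg_left h2 (by positivity)
      _ = _ := by rw [mul_pow, ← pow_mul]; ring
  tfae_have 4 → 2 := by
    rintro ⟨C, hC, h⟩
    have hC1 : 1 ≤ C := by simpa [hμ0] using h 0
    refine ⟨C, hC1, ?_⟩
    suffices hs : ∀ n j k, j + k = n → j ≤ k → M (j + k) ≤ C ^ (j + k) * M j * M k by
      intro j k
      rcases le_total j k with hjk | hjk
      · exact hs _ j k rfl hjk
      · have := hs _ k j rfl hjk
        rw [add_comm j k]
        linarith
    intro n
    induction n with
    | zero =>
      intro j k hn _
      obtain ⟨rfl, rfl⟩ : j = 0 ∧ k = 0 := by omega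
      simp [hM0]
    | succ n ih =>
      intro j k hn hjk
      obtain ⟨k, rfl⟩ : ∃ l, k = l + 1 := ⟨k - 1, by omega⟩
      have hlast : μ (j + k + 1) ≤ C * μ (k + 1) :=
        (hmono (by omega)).trans (h (k + 1))
      have hprev : M (j + k) ≤ C ^ (j + k) * M j * M k := by
        rcases le_total j k with hjk' | hjk'
        · exact ih j k (by omega) hjk'
        · have := ih k j (by omega) hjk'
          rw [add_comm j k]
          linarith
      rw [← add_assoc, hMs, hMs k, pow_succ]
      have hMj := hMp j
      have hMk := hMp k
      calc M (j + k) * μ (j + k + 1)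
          ≤ (C ^ (j + k) * M j * M k) * (C * μ (k + 1)) :=
            mul_le_mul hprev hlast (hpos _).le (by positivity)
        _ = _ := by ring
  tfae_have 4 → 5 := by
    rintro ⟨C, hC, h⟩
    have hC1 : 1 ≤ C := by simpa [hμ0] using h 0
    refine ⟨C, hC1, fun t ht => ?_⟩
    obtain ⟨n, hn, hn'⟩ := exists_SigmaM_eq hmono hunb t
    obtain ⟨m, hm, hm'⟩ := exists_SigmaM_eq hmono hunb (C * t)
    rw [hn, hm]
    rcases Nat.eq_zero_or_pos n with rfl | hpn
    · simp
    have h1 : μ n ≤ t := (hn' n hpn).2 le_rfl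
    have h2 : μ (2 * n) ≤ C * t := (h n).trans (mul_le_mul_of_nonneg_left h1 hC.le)
    exact_mod_cast (hm' (2 * n) (by omega)).1 h2
  tfae_have 5 → 4 := by
    rintro ⟨C, hC, h⟩
    refine ⟨C, by linarith, fun k => ?_⟩
    rcases Nat.eq_zero_or_pos k with rfl | hk
    · simpa [hμ0] using hC
    obtain ⟨n, hn, hn'⟩ := exists_SigmaM_eq hmono hunb (μ k)
    obtain ⟨m, hm, hm'⟩ := exists_SigmaM_eq hmono hunb (C * μ k)
    have h1 : k ≤ n := (hn' k hk).1 le_rfl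
    have h2 := h (μ k) (hpos k)
    rw [hn, hm] at h2
    have h3 : 2 * n ≤ m := by exact_mod_cast h2
    exact (hm' (2 * k) (by omega)).2 (by omega)
  tfae_have 2 → 6 := by
    rintro ⟨C, hC, h⟩
    refine ⟨C, hC, fun t ht => ?_⟩
    rcases ht.eq_or_lt with rfl | ht
    · simp only [omegaM, mul_zero, intervalIntegral.integral_same, zero_add]
      linarith
    have hCp : 0 < C := by linarith
    obtain ⟨n, -, hn⟩ := exists_SigmaM_eq hmono hunb t
    have h1 := omegaM_eq hpos hmono hunb hM0 hMs hMp ht (n := n)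
      (fun i hi hin => (hn i hi).2 hin)
      (fun i hi => by
        by_contra! hlt
        have := (hn i (by omega)).1 hlt.le
        omega)
    have h2 := le_omegaM hpos hmono hunb hM0 hMs hMp (mul_pos hCp ht) (n + n)
    have h3 := Real.log_le_log (hMp _) (h n n)
    rw [Real.log_mul (by have := hMp n; positivity) (hMp n).ne',
      Real.log_mul (by positivity) (hMp n).ne', Real.log_pow] at h3
    rw [Real.log_mul hCp.ne' ht.ne'] at h2
    rw [h1]
    push_cast at h2 h3
    linarith
  tfae_have 6 → 2 := by
    rintro ⟨C, hC, h⟩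
    have hCp : 0 < C := by linarith
    refine ⟨C * Real.exp C, one_le_mul_of_one_le_of_one_le hC (Real.one_le_exp hCp.le),
      fun j k => ?_⟩
    rcases Nat.eq_zero_or_pos (j + k) with hn | hn
    · obtain ⟨rfl, rfl⟩ : j = 0 ∧ k = 0 := by omega
      simp [hM0]
    -- At `C * t = μ (j + k)` the maximum defining `ω(C t)` is attained at the index `j + k`.
    have ht : 0 < μ (j + k) / C := div_pos (hpos _) hCp
    have h1 := omegaM_eq hpos hmono hunb hM0 hMs hMp (hpos (j + k)) (n := j + k)
      (fun i _ hi => hmono hi) (fun i hi => hmono hi.le)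
    have h2 := le_omegaM hpos hmono hunb hM0 hMs hMp ht j
    have h3 := le_omegaM hpos hmono hunb hM0 hMs hMp ht k
    have h4 := h _ ht.le
    rw [mul_div_cancel₀ _ hCp.ne', h1] at h4
    rw [Real.log_div (hpos _).ne' hCp.ne'] at h2 h3
    have hMj := hMp j
    have hMk := hMp k
    rw [← Real.log_le_log_iff (hMp _) (by positivity),
      Real.log_mul (by positivity) hMk.ne', Real.log_mul (by positivity) hMj.ne',
      Real.log_pow, Real.log_mul hCp.ne' (Real.exp_pos C).ne', Real.log_exp]
    have hn1 : (1 : ℝ) ≤ (j : ℝ) + k := by exact_mod_cast hn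
    have h5 : C ≤ ((j : ℝ) + k) * C := le_mul_of_one_le_left hCp.le hn1
    push_cast at h4 ⊢
    linarith
  tfae_finish
end

section
/- Let M = (M_k) and Ṁ = (Ṁ_k) be weight sequences, with quotient sequences μ and μ̇, such that μ_{2k} ≲ μ̇_k. Then: (a) there exists C ≥ 1 such that h_M(t) ≤ h_{Ṁ}(Ct)^2 for all t > 0; and (b) there exists λ < 1 such that 2Γ_{Ṁ}(t) ≤ Γ_M(λt) for all t > 0. -/
/-!
Write `Γ = Γ_M(t)`. The consecutive terms of `k ↦ M_k t^k` have quotient `μ_{k+1} t`, and these terms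
tend to infinity since `M_k^{1/k} → ∞`, so the infimum `h_M(t)` is attained
(`GammaFun_spec`). Comparing the term at `Γ` with its two neighbours gives
`1 ≤ μ_{Γ+1} t` and, if `Γ ≠ 0`, `μ_Γ t < 1`.

* For the first claim, `μ_{2k+1} ≤ μ_{2k+2} ≤ C ν_{k+1}` gives `M_{2k} ≤ (C^k N_k)^2`
  by induction (`le_sq_of_comp`); take `k = Γ_N(Ct)`.
* For the second, let `n = Γ_N(t) ≠ 0` and `λ = 1/C`. Then `μ_{2n} λ t ≤ ν_n t < 1`, whereas
  `1 ≤ μ_{m+1} λ t` for `m = Γ_M(λt)`; monotonicity of `μ` forces `2n < m + 1`.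
-/

open Filter

/-- `h_M(t) = inf_k M_k t^k` (for `t > 0`; `h_M(0) := 0`). -/
noncomputable def hFun (M : ℕ → ℝ) (t : ℝ) : ℝ := ⨅ k : ℕ, M k * t ^ k

/-- The counting function `Γ_M(t) = min{k : h_M(t) = M_k t^k}`. -/
noncomputable def GammaFun (M : ℕ → ℝ) (t : ℝ) : ℕ :=
  sInf {k : ℕ | M k * t ^ k = hFun M t}

lemma weight_pos {μ M : ℕ → ℝ} (hpos : ∀ k, 0 < μ k)
    (hM : ∀ k, M k = ∏ i ∈ Finset.range (k + 1), μ i) (k : ℕ) : 0 < M k := by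
  rw [hM]; exact Finset.prod_pos fun i _ => hpos i

lemma weight_succ {μ M : ℕ → ℝ}
    (hM : ∀ k, M k = ∏ i ∈ Finset.range (k + 1), μ i) (k : ℕ) :
    M (k + 1) = M k * μ (k + 1) := by
  rw [hM, hM, Finset.prod_range_succ]

lemma hFun_le {M : ℕ → ℝ} (hpos : ∀ k, 0 < M k) {t : ℝ} (ht : 0 < t) (k : ℕ) :
    hFun M t ≤ M k * t ^ k := by
  refine ciInf_le ⟨0, ?_⟩ k
  rintro _ ⟨j, rfl⟩
  exact (mul_pos (hpos j) (pow_pos ht j)).le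

/-- The infimum defining `h_M(t)` is attained, so `Γ_M(t)` is a genuine minimum. -/
lemma GammaFun_spec {M : ℕ → ℝ} (hpos : ∀ k, 0 < M k)
    (hws : Tendsto (fun k : ℕ => (M k) ^ (1 / (k : ℝ))) atTop atTop) {t : ℝ} (ht : 0 < t) :
    M (GammaFun M t) * t ^ GammaFun M t = hFun M t := by
  -- once `M_k^{1/k} ≥ 2/t`, the `k`-th term is at least `2^k`
  have htend : Tendsto (fun k : ℕ => M k * t ^ k) atTop atTop := by
    refine tendsto_atTop_mono' atTop ?_ (tendsto_pow_atTop_atTop_of_one_lt (one_lt_two (α := ℝ)))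
    filter_upwards [hws.eventually_ge_atTop (2 / t), eventually_ge_atTop 1] with k hk hk1
    have hroot : ((M k) ^ (1 / (k : ℝ))) ^ k = M k := by
      rw [one_div]
      exact Real.rpow_inv_natCast_pow (hpos k).le (by omega)
    calc (2 : ℝ) ^ k = (2 / t) ^ k * t ^ k := by rw [← mul_pow, div_mul_cancel₀ _ ht.ne']
      _ ≤ ((M k) ^ (1 / (k : ℝ))) ^ k * t ^ k := by gcongr
      _ = M k * t ^ k := by rw [hroot]
  rw [← Nat.cofinite_eq_atTop] at htend
  obtain ⟨n, hn⟩ := htend.exists_forall_le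
  have hne : {k : ℕ | M k * t ^ k = hFun M t}.Nonempty :=
    ⟨n, le_antisymm (le_ciInf hn) (hFun_le hpos ht n)⟩
  exact Nat.sInf_mem hne

lemma one_le_of_GammaFun {μ M : ℕ → ℝ} (hpos : ∀ k, 0 < μ k)
    (hM : ∀ k, M k = ∏ i ∈ Finset.range (k + 1), μ i)
    (hws : Tendsto (fun k : ℕ => (M k) ^ (1 / (k : ℝ))) atTop atTop) {t : ℝ} (ht : 0 < t) :
    1 ≤ μ (GammaFun M t + 1) * t := by
  have hMpos := weight_pos hpos hM
  have h := hFun_le hMpos ht (GammaFun M t + 1)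
  rw [← GammaFun_spec hMpos hws ht, weight_succ hM, pow_succ] at h
  have hp := mul_pos (hMpos (GammaFun M t)) (pow_pos ht (GammaFun M t))
  refine le_of_mul_le_mul_left ?_ hp
  linarith

/-- Since `Γ_M(t)` is the least minimizer, the term just before it is strictly larger. -/
lemma lt_one_of_GammaFun {μ M : ℕ → ℝ} (hpos : ∀ k, 0 < μ k)
    (hM : ∀ k, M k = ∏ i ∈ Finset.range (k + 1), μ i)
    (hws : Tendsto (fun k : ℕ => (M k) ^ (1 / (k : ℝ))) atTop atTop) {t : ℝ} (ht : 0 < t)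
    (h0 : GammaFun M t ≠ 0) : μ (GammaFun M t) * t < 1 := by
  have hMpos := weight_pos hpos hM
  have hspec := GammaFun_spec hMpos hws ht
  obtain ⟨n, hn⟩ := Nat.exists_eq_succ_of_ne_zero h0
  have hnot : n ∉ {k : ℕ | M k * t ^ k = hFun M t} :=
    Nat.notMem_of_lt_sInf (show n < GammaFun M t by omega)
  have h := lt_of_le_of_ne (hFun_le hMpos ht n) (Ne.symm hnot)
  rw [hn, Nat.succ_eq_add_one] at hspec ⊢
  rw [← hspec, weight_succ hM, pow_succ] at h
  have hp := mul_pos (hMpos n) (pow_pos ht n)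
  refine lt_of_mul_lt_mul_left ?_ hp.le
  linarith

lemma le_sq_of_comp {μ ν M N : ℕ → ℝ} (hμpos : ∀ k, 0 < μ k) (hμmono : Monotone μ)
    (hμ0 : μ 0 = 1) (hν0 : ν 0 = 1)
    (hM : ∀ k, M k = ∏ i ∈ Finset.range (k + 1), μ i)
    (hN : ∀ k, N k = ∏ i ∈ Finset.range (k + 1), ν i)
    {C : ℝ} (hC : ∀ k : ℕ, μ (2 * k) ≤ C * ν k) (k : ℕ) :
    M (2 * k) ≤ (C ^ k * N k) ^ 2 := by
  induction k with
  | zero => simp [hM, hN, hμ0, hν0]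
  | succ k ih =>
    have h2 : μ (2 * k + 1 + 1) ≤ C * ν (k + 1) := hC (k + 1)
    have h1 : μ (2 * k + 1) ≤ C * ν (k + 1) := (hμmono (Nat.le_succ _)).trans h2
    have p1 := hμpos (2 * k + 1)
    have p2 := hμpos (2 * k + 1 + 1)
    calc M (2 * (k + 1)) = M (2 * k) * (μ (2 * k + 1) * μ (2 * k + 1 + 1)) := by
          rw [show 2 * (k + 1) = 2 * k + 1 + 1 by ring, weight_succ hM, weight_succ hM, mul_assoc]
      _ ≤ (C ^ k * N k) ^ 2 * ((C * ν (k + 1)) * (C * ν (k + 1))) :=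
          mul_le_mul ih (mul_le_mul h1 h2 p2.le (p1.le.trans h1)) (mul_pos p1 p2).le (sq_nonneg _)
      _ = (C ^ (k + 1) * N (k + 1)) ^ 2 := by rw [weight_succ hN]; ring


/-- Lemma 2.4: if `μ_{2k} ≲ ν_k` then `h_M(t) ≤ h_N(Ct)^2` and `2Γ_N(t) ≤ Γ_M(λt)`. -/
theorem stmt_1 (μ ν M N : ℕ → ℝ)
    (hμpos : ∀ k, 0 < μ k) (hμmono : Monotone μ) (hμ0 : μ 0 = 1)
    (hνpos : ∀ k, 0 < ν k) (hνmono : Monotone ν) (hν0 : ν 0 = 1)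
    (hM : ∀ k, M k = ∏ i ∈ Finset.range (k + 1), μ i)
    (hN : ∀ k, N k = ∏ i ∈ Finset.range (k + 1), ν i)
    (hMws : Tendsto (fun k : ℕ => (M k) ^ (1 / (k : ℝ))) atTop atTop)
    (hNws : Tendsto (fun k : ℕ => (N k) ^ (1 / (k : ℝ))) atTop atTop)
    (hcomp : ∃ C > 0, ∀ k : ℕ, μ (2 * k) ≤ C * ν k) :
    (∃ C : ℝ, 1 ≤ C ∧ ∀ t : ℝ, 0 < t → hFun M t ≤ (hFun N (C * t)) ^ 2) ∧
    (∃ lam : ℝ, 0 < lam ∧ lam < 1 ∧ ∀ t : ℝ, 0 < t →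
      2 * GammaFun N t ≤ GammaFun M (lam * t)) := by
  obtain ⟨C₀, -, hC₀⟩ := hcomp
  -- enlarge the constant so that it serves both claims: `C ≥ 1` and `1 / C < 1`
  obtain ⟨C, hC2, hC⟩ : ∃ C : ℝ, 2 ≤ C ∧ ∀ k : ℕ, μ (2 * k) ≤ C * ν k :=
    ⟨max C₀ 2, le_max_right _ _, fun k =>
      (hC₀ k).trans (mul_le_mul_of_nonneg_right (le_max_left _ _) (hνpos k).le)⟩
  have hCpos : 0 < C := by linarith
  have hMpos := weight_pos hμpos hM
  have hNpos := weight_pos hνpos hN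
  refine ⟨⟨C, by linarith, fun t ht => ?_⟩,
    ⟨1 / C, by positivity, by rw [div_lt_one hCpos]; linarith, fun t ht => ?_⟩⟩
  · rw [← GammaFun_spec hNpos hNws (mul_pos hCpos ht)]
    generalize GammaFun N (C * t) = n
    calc hFun M t ≤ M (2 * n) * t ^ (2 * n) := hFun_le hMpos ht _
      _ ≤ (C ^ n * N n) ^ 2 * t ^ (2 * n) := by
          gcongr
          exact le_sq_of_comp hμpos hμmono hμ0 hν0 hM hN hC n
      _ = (N n * (C * t) ^ n) ^ 2 := by ring
  · rcases eq_or_ne (GammaFun N t) 0 with h0 | h0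
    · simp [h0]
    have hn := lt_one_of_GammaFun hνpos hN hNws ht h0
    have hlt : 0 < 1 / C * t := by positivity
    have hm := one_le_of_GammaFun hμpos hM hMws hlt
    by_contra! hcon
    have hle : μ (GammaFun M (1 / C * t) + 1) ≤ C * ν (GammaFun N t) :=
      (hμmono hcon).trans (hC _)
    have hcontra : 1 ≤ ν (GammaFun N t) * t :=
      calc 1 ≤ μ (GammaFun M (1 / C * t) + 1) * (1 / C * t) := hm
        _ ≤ C * ν (GammaFun N t) * (1 / C * t) := by gcongr
        _ = ν (GammaFun N t) * t := by field_simp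
    linarith
end

section
/- Let ν = (ν_k) be an increasing positive sequence with ν_0 = 1 and ∑_k 1/ν_k < ∞, and let σ be the descendant of ν. Then: (1) σ ≲ ν; (2) ∑_{j≥k} 1/ν_j ≲ k/σ_k; (3) the sequence σ_k^* := σ_k/k satisfies σ_k^* ≥ 1, is increasing, and tends to ∞. -/
/-!
Since `τ_k = (k + 1)/ν_k + T_{k+1}`, with `T` the tail sum, and
`τ_{k+1} = (k + 1)/ν_{k+1} + T_{k+1}`, the sequence `τ` is antitone (`tauSeq_antitone`).
It tends to `0` (`tauSeq_tendsto`): the tails of a convergent series vanish, and a nonincreasing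
summable sequence `a` satisfies `k * a k → 0` (Olivier's theorem). The latter is immediate here:
`τ` has some limit `L ≥ 0`, so `k/ν_k → L`, and `L > 0` would force `1/ν_k ≥ (L/2)/k` eventually,
against the divergence of the harmonic series.
As `σ_k/k = τ_1/τ_k` for `k ≥ 1`, everything follows from these two facts and from
`k/ν_k ≤ τ_k`, `T_k ≤ τ_k`.
-/

open Filter

/-- The tail sum `∑_{j ≥ k} 1/ν_j`. -/
noncomputable def tailSum (ν : ℕ → ℝ) (k : ℕ) : ℝ := ∑' i : ℕ, 1 / ν (i + k)

/-- `τ_k = k/ν_k + ∑_{j ≥ k} 1/ν_j` (for `k ≥ 1`). -/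
noncomputable def tauSeq (ν : ℕ → ℝ) (k : ℕ) : ℝ := (k : ℝ) / ν k + tailSum ν k

/-- The descendant `σ` of `ν`: `σ_0 = 1`, `σ_k = τ_1 k / τ_k` for `k ≥ 1`. -/
noncomputable def sigmaSeq (ν : ℕ → ℝ) : ℕ → ℝ
  | 0 => 1
  | (k + 1) => tauSeq ν 1 * ((k : ℝ) + 1) / tauSeq ν (k + 1)

lemma tailSum_nonneg {ν : ℕ → ℝ} (hpos : ∀ k, 0 < ν k) (k : ℕ) : 0 ≤ tailSum ν k :=
  tsum_nonneg fun i => (one_div_pos.2 (hpos (i + k))).le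

lemma tailSum_succ {ν : ℕ → ℝ} (hsum : Summable fun k => 1 / ν k) (k : ℕ) :
    tailSum ν k = 1 / ν k + tailSum ν (k + 1) := by
  have h := ((summable_nat_add_iff k).2 hsum).tsum_eq_zero_add
  simpa [tailSum, add_assoc, add_comm, add_left_comm] using h

lemma tailSum_tendsto (ν : ℕ → ℝ) : Tendsto (tailSum ν) atTop (nhds 0) :=
  tendsto_sum_nat_add fun k => 1 / ν k

lemma tauSeq_pos {ν : ℕ → ℝ} (hpos : ∀ k, 0 < ν k) (hsum : Summable fun k => 1 / ν k) (k : ℕ) :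
    0 < tauSeq ν k := by
  have h1 := tailSum_succ hsum k
  have h2 := tailSum_nonneg hpos (k + 1)
  have h3 := one_div_pos.2 (hpos k)
  have h4 : 0 ≤ (k : ℝ) / ν k := div_nonneg k.cast_nonneg (hpos k).le
  unfold tauSeq
  linarith

lemma tauSeq_antitone {ν : ℕ → ℝ} (hpos : ∀ k, 0 < ν k) (hmono : Monotone ν)
    (hsum : Summable fun k => 1 / ν k) : Antitone (tauSeq ν) := by
  refine antitone_nat_of_succ_le fun k => ?_
  have h1 := tailSum_succ hsum k
  have h2 : ((k : ℝ) + 1) / ν (k + 1) ≤ ((k : ℝ) + 1) / ν k :=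
    div_le_div_of_nonneg_left (by positivity) (hpos k) (hmono k.le_succ)
  rw [add_div] at h2
  unfold tauSeq
  push_cast
  rw [add_div]
  rw [add_div] at h2
  linarith

lemma tauSeq_tendsto {ν : ℕ → ℝ} (hpos : ∀ k, 0 < ν k) (hmono : Monotone ν)
    (hsum : Summable fun k => 1 / ν k) : Tendsto (tauSeq ν) atTop (nhds 0) := by
  obtain ⟨L, hL⟩ : ∃ L, Tendsto (tauSeq ν) atTop (nhds L) :=
    ⟨_, tendsto_atTop_ciInf (tauSeq_antitone hpos hmono hsum)
      ⟨0, by rintro _ ⟨k, rfl⟩; exact (tauSeq_pos hpos hsum k).le⟩⟩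
  have hL0 : 0 ≤ L := ge_of_tendsto' hL fun k => (tauSeq_pos hpos hsum k).le
  rcases hL0.eq_or_lt with rfl | hLpos
  · exact hL
  exfalso
  have hq : Tendsto (fun k : ℕ => (k : ℝ) / ν k) atTop (nhds L) := by
    simpa [tauSeq] using hL.sub (tailSum_tendsto ν)
  have hev : ∀ᶠ k : ℕ in atTop, ‖L / 2 * (1 / (k : ℝ))‖ ≤ 1 / ν k := by
    filter_upwards [hq.eventually (lt_mem_nhds (half_lt_self hLpos)), eventually_gt_atTop 0]
      with k hk hk0
    have hk0' : (0 : ℝ) < k := by exact_mod_cast hk0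
    rw [Real.norm_of_nonneg (by positivity), mul_one_div, div_le_iff₀ hk0', one_div_mul_eq_div]
    exact hk.le
  have hs : Summable fun k : ℕ => L / 2 * (1 / (k : ℝ)) :=
    Summable.of_norm_bounded_eventually_nat hsum hev
  exact Real.not_summable_one_div_natCast ((summable_mul_left_iff (half_pos hLpos).ne').1 hs)

lemma sigmaSeq_eq (ν : ℕ → ℝ) {k : ℕ} (hk : 1 ≤ k) :
    sigmaSeq ν k = tauSeq ν 1 * k / tauSeq ν k := by
  obtain ⟨m, rfl⟩ := Nat.exists_eq_add_of_le' hk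
  simp [sigmaSeq]

lemma sigmaSeq_div (ν : ℕ → ℝ) {k : ℕ} (hk : 1 ≤ k) :
    sigmaSeq ν k / k = tauSeq ν 1 / tauSeq ν k := by
  have : (k : ℝ) ≠ 0 := by exact_mod_cast (by omega : k ≠ 0)
  rw [sigmaSeq_eq ν hk, div_right_comm, mul_div_cancel_right₀ _ this]

/-- Lemma 4.2 (1)–(3): basic properties of the descendant. -/
theorem stmt_4 (ν : ℕ → ℝ)
    (hpos : ∀ k, 0 < ν k) (hmono : Monotone ν) (h0 : ν 0 = 1)
    (hsum : Summable fun k => 1 / ν k) :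
    (∃ C > 0, ∀ k : ℕ, sigmaSeq ν k ≤ C * ν k) ∧
    (∃ C > 0, ∀ k : ℕ, 1 ≤ k → tailSum ν k ≤ C * ((k : ℝ) / sigmaSeq ν k)) ∧
    ((∀ k : ℕ, 1 ≤ k → 1 ≤ sigmaSeq ν k / k) ∧
     (∀ j k : ℕ, 1 ≤ j → j ≤ k → sigmaSeq ν j / j ≤ sigmaSeq ν k / k) ∧
     Tendsto (fun k : ℕ => sigmaSeq ν k / k) atTop atTop) := by
  have hτ := tauSeq_pos hpos hsum
  have hanti := tauSeq_antitone hpos hmono hsum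
  refine ⟨⟨tauSeq ν 1 + 1, by linarith [hτ 1], fun k => ?_⟩, ⟨tauSeq ν 1, hτ 1, fun k hk => ?_⟩,
    fun k hk => ?_, fun j k hj hjk => ?_, ?_⟩
  · rcases Nat.eq_zero_or_pos k with rfl | hk
    -- The summand `1` in the constant serves `σ_0 = 1 = ν_0`.
    · simp only [sigmaSeq, h0]
      linarith [hτ 1]
    · have hle : (k : ℝ) ≤ ν k * tauSeq ν k := by
        rw [← div_le_iff₀' (hpos k)]
        exact le_add_of_nonneg_right (tailSum_nonneg hpos k)
      rw [sigmaSeq_eq ν hk, div_le_iff₀ (hτ k)]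
      nlinarith [mul_le_mul_of_nonneg_left hle (hτ 1).le, mul_pos (hpos k) (hτ k)]
  · rw [← inv_div, sigmaSeq_div ν hk, inv_div, mul_div_cancel₀ _ (hτ 1).ne']
    exact le_add_of_nonneg_left (div_nonneg k.cast_nonneg (hpos k).le)
  · rw [sigmaSeq_div ν hk, one_le_div (hτ k)]
    exact hanti hk
  · rw [sigmaSeq_div ν hj, sigmaSeq_div ν (hj.trans hjk)]
    exact div_le_div_of_nonneg_left (hτ 1).le (hτ k) (hanti hjk)
  · have hlim : Tendsto (tauSeq ν) atTop (nhdsWithin 0 (Set.Ioi 0)) :=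
      tendsto_nhdsWithin_iff.2 ⟨tauSeq_tendsto hpos hmono hsum, Eventually.of_forall hτ⟩
    refine (hlim.inv_tendsto_nhdsGT_zero.const_mul_atTop (hτ 1)).congr' ?_
    filter_upwards [eventually_ge_atTop 1] with k hk
    rw [sigmaSeq_div ν hk, div_eq_mul_inv, Pi.inv_apply]
end

section
/- Let ν = (ν_k) be an increasing positive sequence with ν_0 = 1 and ∑_k 1/ν_k < ∞, and let σ be the descendant of ν. If μ = (μ_k) is any increasing positive sequence satisfying μ ≲ ν and ∑_{j≥k} 1/ν_j ≲ k/μ_k, then μ ≲ σ; that is, σ is (up to constants) the largest sequence satisfying σ ≲ ν and ∑_{j≥k} 1/ν_j ≲ k/σ_k. -/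
theorem tauSeq_pos_s6 (ν : ℕ → ℝ) (hν : ∀ k, 0 < ν k) (n : ℕ) (hn : 1 ≤ n) : 0 < tauSeq ν n := by
  have h1 : 0 ≤ tailSum ν n := tsum_nonneg fun i => (one_div_pos.mpr (hν _)).le
  have h2 : 0 < (n : ℝ) / ν n := div_pos (by exact_mod_cast hn) (hν n)
  exact add_pos_of_pos_of_nonneg h2 h1

/-- Lemma 4.2 (5): the descendant `σ` is the largest sequence with `σ ≲ ν` and
`∑_{j≥k} 1/ν_j ≲ k/σ_k`. -/
theorem stmt_6 (ν μ : ℕ → ℝ)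
    (hνpos : ∀ k, 0 < ν k) (hνmono : Monotone ν) (hν0 : ν 0 = 1)
    (hsum : Summable fun k => 1 / ν k)
    (hμpos : ∀ k, 0 < μ k) (hμmono : Monotone μ)
    (hμν : ∃ C > 0, ∀ k : ℕ, μ k ≤ C * ν k)
    (htail : ∃ C > 0, ∀ k : ℕ, 1 ≤ k → tailSum ν k ≤ C * ((k : ℝ) / μ k)) :
    ∃ C > 0, ∀ k : ℕ, μ k ≤ C * sigmaSeq ν k := by
  obtain ⟨A, hA, hμν⟩ := hμν
  obtain ⟨B, hB, htail⟩ := htail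
  have hτ1 : 0 < tauSeq ν 1 := tauSeq_pos_s6 ν hνpos 1 le_rfl
  have hμ0 := hμpos 0
  have hD : 0 < (A + B) / tauSeq ν 1 := by positivity
  refine ⟨μ 0 + (A + B) / tauSeq ν 1, by positivity, fun k => ?_⟩
  cases k with
  | zero =>
    simp only [sigmaSeq]
    linarith
  | succ k =>
    have hτ : 0 < tauSeq ν (k + 1) := tauSeq_pos_s6 ν hνpos (k + 1) (by omega)
    have hμ := hμpos (k + 1)
    have hν := hνpos (k + 1)
    have hfirst : ((k + 1 : ℕ) : ℝ) / ν (k + 1) ≤ A * (((k + 1 : ℕ) : ℝ) / μ (k + 1)) := by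
      rw [← mul_div_assoc, div_le_div_iff₀ hν hμ]
      calc ((k + 1 : ℕ) : ℝ) * μ (k + 1) ≤ ((k + 1 : ℕ) : ℝ) * (A * ν (k + 1)) := by
            gcongr
            exact hμν (k + 1)
        _ = A * ((k + 1 : ℕ) : ℝ) * ν (k + 1) := by ring
    have hτle : tauSeq ν (k + 1) ≤ (A + B) * ((k : ℝ) + 1) / μ (k + 1) := by
      have ht := htail (k + 1) (by omega)
      calc tauSeq ν (k + 1)
          ≤ A * (((k + 1 : ℕ) : ℝ) / μ (k + 1)) + B * (((k + 1 : ℕ) : ℝ) / μ (k + 1)) :=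
            add_le_add hfirst ht
        _ = (A + B) * ((k : ℝ) + 1) / μ (k + 1) := by
            push_cast
            ring
    have hmain : μ (k + 1) ≤ (A + B) * ((k : ℝ) + 1) / tauSeq ν (k + 1) := by
      rw [le_div_iff₀ hμ] at hτle
      rw [le_div_iff₀ hτ]
      linarith
    have hσ : 0 < sigmaSeq ν (k + 1) := by
      simp only [sigmaSeq]
      positivity
    calc μ (k + 1) ≤ (A + B) * ((k : ℝ) + 1) / tauSeq ν (k + 1) := hmain
      _ = (A + B) / tauSeq ν 1 * sigmaSeq ν (k + 1) := by
          simp only [sigmaSeq]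
          field_simp
      _ ≤ (μ 0 + (A + B) / tauSeq ν 1) * sigmaSeq ν (k + 1) := by
          gcongr
          linarith
end

section
/- Let S be a weight sequence such that σ_k^* := σ_k/k is increasing, where σ is the quotient sequence of S, and set s_k := σ_1^* ⋯ σ_k^*. Let E ⊆ ℝ^n be compact and let F = (F^α)_{α∈ℕ^n} be a jet on E satisfying, for some C > 0 and ρ ≥ 1: |F^α(a)| ≤ C ρ^{|α|} S_{|α|} for all α ∈ ℕ^n and a ∈ E, and |(R_a^p F)^α(b)| ≤ C ρ^{p+1} |α|! s_{p+1} |b−a|^{p+1−|α|} for all p ∈ ℕ, |α| ≤ p, a, b ∈ E. Then for all a_1, a_2 ∈ E, x ∈ ℝ^n, and multi-indices α with |α| ≤ p: |∂^α(T_{a_1}^p F − T_{a_2}^p F)(x)| ≤ C (2n²ρ)^{p+1} |α|! s_{p+1} (|a_1−x| + |a_1−a_2|)^{p+1−|α|}. -/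
/-!
Recentring the polynomial `T_{a₂}^p F` at `a₁` by the binomial theorem turns the difference of the
two Taylor polynomials into a polynomial in `x - a₁` whose coefficients are the Whitney remainders
at `a₁`:
`T_{a₁}^p F (x) - T_{a₂}^p F (x) = ∑_{|γ| ≤ p} (x - a₁)^γ / γ! * (R_{a₂}^p F)^γ (a₁)`.
In this divided-power basis `∂^α` just shifts the coefficients by `α`, so
`∂^α (T_{a₁}^p F - T_{a₂}^p F)(x) = ∑_{|γ| ≤ p - |α|} (x - a₁)^γ / γ! * (R_{a₂}^p F)^{α+γ} (a₁)`.
The remainder estimate bounds each term. Grouping by `k = |γ|`, the multinomial theorem gives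
`∑_{|γ| = k} 1 / γ! = n^k / k!`, while `(|α| + k)! ≤ 2^{|α| + k} |α|! k!`; what is left is
`∑_k A^k B^{m-k} ≤ (A + B)^m` with `A = ‖a₁ - x‖`, `B = ‖a₁ - a₂‖`, `m = p + 1 - |α|`.
-/

open Filter

/-- The finite set of multi-indices `α ∈ ℕ^n` with `|α| ≤ p`. -/
noncomputable def midx (n p : ℕ) : Finset (Fin n → ℕ) :=
  (Fintype.piFinset fun _ : Fin n => Finset.range (p + 1)).filter (fun α => ∑ i, α i ≤ p)

/-- The Taylor polynomial `T_a^p F (x) = ∑_{|α| ≤ p} (x-a)^α F^α(a) / α!` of a jet `F`. -/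
noncomputable def Tpoly {n : ℕ} (F : (Fin n → ℕ) → EuclideanSpace ℝ (Fin n) → ℝ)
    (a : EuclideanSpace ℝ (Fin n)) (p : ℕ) : EuclideanSpace ℝ (Fin n) → ℝ :=
  fun x => ∑ α ∈ midx n p, (∏ i, (x i - a i) ^ (α i) / (Nat.factorial (α i) : ℝ)) * F α a

/-- The Whitney remainder `(R_a^p F)^α(x) = F^α(x) − ∑_{|β| ≤ p-|α|} (x-a)^β F^{α+β}(a)/β!`. -/
noncomputable def Rrem {n : ℕ} (F : (Fin n → ℕ) → EuclideanSpace ℝ (Fin n) → ℝ)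
    (a : EuclideanSpace ℝ (Fin n)) (p : ℕ) (α : Fin n → ℕ)
    (x : EuclideanSpace ℝ (Fin n)) : ℝ :=
  F α x - ∑ β ∈ midx n (p - ∑ i, α i),
    (∏ i, (x i - a i) ^ (β i) / (Nat.factorial (β i) : ℝ)) * F (α + β) a

/-- The partial derivative `∂_i f` of a function on `ℝ^n`. -/
noncomputable def pderivE {n : ℕ} (i : Fin n) (f : EuclideanSpace ℝ (Fin n) → ℝ) :
    EuclideanSpace ℝ (Fin n) → ℝ :=
  fun x => fderiv ℝ f x (EuclideanSpace.single i 1)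

/-- The partial derivative `∂^β f` of a function on `ℝ^n` for a multi-index `β`. -/
noncomputable def pderivMulti {n : ℕ} (β : Fin n → ℕ) (f : EuclideanSpace ℝ (Fin n) → ℝ) :
    EuclideanSpace ℝ (Fin n) → ℝ :=
  (List.finRange n).foldr (fun i g => (pderivE i)^[β i] g) f

/-! ### Recentring polynomials in the divided-power basis -/

/-- The divided-power monomial `y^γ / γ!`. -/
noncomputable def dmon {n : ℕ} (γ : Fin n → ℕ) (y : Fin n → ℝ) : ℝ :=
  ∏ i, y i ^ γ i / (Nat.factorial (γ i) : ℝ)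

lemma mem_midx {n p : ℕ} {γ : Fin n → ℕ} : γ ∈ midx n p ↔ ∑ i, γ i ≤ p := by
  simp only [midx, Finset.mem_filter, Fintype.mem_piFinset, Finset.mem_range, and_iff_right_iff_imp]
  intro h i
  have := Finset.single_le_sum (f := γ) (fun _ _ => Nat.zero_le _) (Finset.mem_univ i)
  omega

lemma pow_div_factorial_add (y z : ℝ) (k : ℕ) :
    (y + z) ^ k / (k.factorial : ℝ) =
      ∑ j ∈ Finset.range (k + 1),
        (y ^ j / (j.factorial : ℝ)) * (z ^ (k - j) / ((k - j).factorial : ℝ)) := by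
  rw [add_pow, Finset.sum_div]
  refine Finset.sum_congr rfl fun j hj => ?_
  have hj' : j ≤ k := by simpa [Nat.lt_succ_iff] using hj
  rw [Nat.cast_choose ℝ hj']
  have := Nat.cast_ne_zero (R := ℝ).2 (Nat.factorial_ne_zero k)
  have := Nat.cast_ne_zero (R := ℝ).2 (Nat.factorial_ne_zero j)
  have := Nat.cast_ne_zero (R := ℝ).2 (Nat.factorial_ne_zero (k - j))
  field_simp

lemma dmon_add {n : ℕ} (γ : Fin n → ℕ) (y z : Fin n → ℝ) :
    dmon γ (y + z) =
      ∑ u ∈ Fintype.piFinset fun i => Finset.range (γ i + 1), dmon u y * dmon (γ - u) z := by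
  simp only [dmon, Pi.add_apply, pow_div_factorial_add, Finset.prod_univ_sum,
    Finset.prod_mul_distrib, Pi.sub_apply]

/-- Recentring a polynomial of degree at most `p` written in the divided-power basis. -/
lemma sum_dmon_add {n p : ℕ} (f : (Fin n → ℕ) → ℝ) (y z : Fin n → ℝ) :
    ∑ γ ∈ midx n p, dmon γ (y + z) * f γ =
      ∑ γ ∈ midx n p, dmon γ y * ∑ δ ∈ midx n (p - ∑ i, γ i), dmon δ z * f (γ + δ) := by
  simp only [dmon_add, Finset.sum_mul, Finset.mul_sum]
  rw [Finset.sum_sigma', Finset.sum_sigma']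
  refine Finset.sum_nbij' (fun q => ⟨q.2, q.1 - q.2⟩) (fun q => ⟨q.1 + q.2, q.1⟩) ?_ ?_ ?_ ?_ ?_
  · rintro ⟨γ, u⟩ h
    simp only [Finset.mem_sigma, mem_midx, Fintype.mem_piFinset, Finset.mem_range,
      Nat.lt_succ_iff] at h ⊢
    have hs : ∑ i, γ i = ∑ i, u i + ∑ i, (γ - u) i := by
      rw [← Finset.sum_add_distrib]
      exact Finset.sum_congr rfl fun i _ => (Nat.add_sub_cancel' (h.2 i)).symm
    omega
  · rintro ⟨γ, u⟩ h
    simp only [Finset.mem_sigma, mem_midx, Fintype.mem_piFinset, Finset.mem_range,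
      Pi.add_apply, Finset.sum_add_distrib] at h ⊢
    exact ⟨by omega, fun i => by omega⟩
  · rintro ⟨γ, u⟩ h
    simp only [Finset.mem_sigma, Fintype.mem_piFinset, Finset.mem_range, Nat.lt_succ_iff] at h
    have : u + (γ - u) = γ := add_tsub_cancel_of_le (show u ≤ γ from h.2)
    simp [this]
  · rintro ⟨γ, u⟩ h
    simp
  · rintro ⟨γ, u⟩ h
    simp only [Finset.mem_sigma, Fintype.mem_piFinset, Finset.mem_range, Nat.lt_succ_iff] at h
    have : u + (γ - u) = γ := add_tsub_cancel_of_le (show u ≤ γ from h.2)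
    simp only [this]
    ring

/-- The difference of two Taylor polynomials, expanded at `a₁`, has the Whitney remainders at `a₁`
as coefficients. -/
lemma Tpoly_sub_Tpoly {n : ℕ} (F : (Fin n → ℕ) → EuclideanSpace ℝ (Fin n) → ℝ)
    (a₁ a₂ : EuclideanSpace ℝ (Fin n)) (p : ℕ) (x : EuclideanSpace ℝ (Fin n)) :
    Tpoly F a₁ p x - Tpoly F a₂ p x =
      ∑ γ ∈ midx n p, dmon γ (fun i => x i - a₁ i) * Rrem F a₂ p γ a₁ := by
  have h := sum_dmon_add (p := p) (fun γ => F γ a₂) (fun i => x i - a₁ i) (fun i => a₁ i - a₂ i)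
  have e : ((fun i => x i - a₁ i) + fun i => a₁ i - a₂ i) = fun i => x i - a₂ i := by
    funext i; simp
  rw [e] at h
  simp only [Rrem, mul_sub, Finset.sum_sub_distrib]
  exact congrArg₂ (· - ·) rfl h

/-! ### Partial derivatives -/

lemma hasFDerivAt_factor {n : ℕ} (a x : EuclideanSpace ℝ (Fin n)) (k : ℕ) (j : Fin n) :
    HasFDerivAt (fun y : EuclideanSpace ℝ (Fin n) => (y j - a j) ^ k / (k.factorial : ℝ))
      ((k * (x j - a j) ^ (k - 1) / (k.factorial : ℝ)) •
        (EuclideanSpace.proj j : EuclideanSpace ℝ (Fin n) →L[ℝ] ℝ)) x := by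
  have h1 : HasFDerivAt (fun y : EuclideanSpace ℝ (Fin n) => y j - a j)
      (EuclideanSpace.proj j : EuclideanSpace ℝ (Fin n) →L[ℝ] ℝ) x :=
    ((EuclideanSpace.proj j : EuclideanSpace ℝ (Fin n) →L[ℝ] ℝ).hasFDerivAt).sub_const _
  have h2 : HasDerivAt (fun t : ℝ => t ^ k / (k.factorial : ℝ))
      (k * (x j - a j) ^ (k - 1) / (k.factorial : ℝ)) (x j - a j) :=
    (hasDerivAt_pow k _).div_const _
  exact h2.comp_hasFDerivAt x h1

lemma differentiable_dmon {n : ℕ} (a : EuclideanSpace ℝ (Fin n)) (γ : Fin n → ℕ) :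
    Differentiable ℝ (fun y : EuclideanSpace ℝ (Fin n) => dmon γ (fun i => y i - a i)) := by
  unfold dmon
  intro x
  exact (HasFDerivAt.finsetProd (u := Finset.univ)
    (fun j _ => hasFDerivAt_factor a x (γ j) j)).differentiableAt

lemma pderivE_dmon {n : ℕ} (a : EuclideanSpace ℝ (Fin n)) (γ : Fin n → ℕ) (i : Fin n)
    (x : EuclideanSpace ℝ (Fin n)) :
    pderivE i (fun y => dmon γ (fun j => y j - a j)) x =
      if γ i = 0 then 0 else dmon (γ - Pi.single i 1) (fun j => x j - a j) := by
  have h := HasFDerivAt.finsetProd (u := Finset.univ)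
    (fun j _ => hasFDerivAt_factor a x (γ j) j)
  unfold pderivE dmon
  rw [h.fderiv]
  have hproj : ∀ j : Fin n, (EuclideanSpace.proj j : EuclideanSpace ℝ (Fin n) →L[ℝ] ℝ)
      (EuclideanSpace.single i 1) = if j = i then 1 else 0 := fun j => by simp
  simp only [sum_apply, smul_apply, smul_eq_mul, hproj]
  rw [Finset.sum_eq_single i (fun j _ hj => by simp [hj]) (by simp),
    if_pos rfl, mul_one]
  split_ifs with h0
  · simp [h0]
  · rw [← Finset.mul_prod_erase Finset.univ _ (Finset.mem_univ i), mul_comm]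
    congr 1
    · obtain ⟨k, hk⟩ := Nat.exists_eq_succ_of_ne_zero h0
      have := Nat.cast_ne_zero (R := ℝ).2 (Nat.factorial_ne_zero k)
      have : (k : ℝ) + 1 ≠ 0 := by positivity
      simp only [hk, Pi.sub_apply, Pi.single_eq_same, Nat.succ_sub_one, Nat.factorial_succ]
      push_cast
      field_simp
    · refine Finset.prod_congr rfl fun j hj => ?_
      simp [Finset.ne_of_mem_erase hj]

lemma single_one_le {n : ℕ} {γ : Fin n → ℕ} {i : Fin n} (h : γ i ≠ 0) :
    (Pi.single i 1 : Fin n → ℕ) ≤ γ := by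
  intro j
  rcases eq_or_ne j i with rfl | hj
  · simpa using Nat.one_le_iff_ne_zero.2 h
  · simp [hj]

/-- In the divided-power basis, `∂_i` shifts the coefficient family. -/
lemma pderivE_sum {n p : ℕ} (a : EuclideanSpace ℝ (Fin n)) (c : (Fin n → ℕ) → ℝ)
    (hc : ∀ γ, p < ∑ i, γ i → c γ = 0) (i : Fin n) :
    pderivE i (fun y => ∑ γ ∈ midx n p, dmon γ (fun j => y j - a j) * c γ) =
      fun y => ∑ γ ∈ midx n p, dmon γ (fun j => y j - a j) * c (γ + Pi.single i 1) := by
  funext x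
  have hlin : pderivE i (fun y => ∑ γ ∈ midx n p, dmon γ (fun j => y j - a j) * c γ) x =
      ∑ γ ∈ midx n p, pderivE i (fun y => dmon γ (fun j => y j - a j)) x * c γ := by
    have h := HasFDerivAt.fun_sum (u := midx n p) (x := x)
      (fun γ _ => ((differentiable_dmon a γ x).hasFDerivAt).mul_const (c γ))
    unfold pderivE
    rw [h.fderiv]
    simp [mul_comm]
  have hsingle : ∑ j, (Pi.single i 1 : Fin n → ℕ) j = 1 := by simp
  rw [hlin]
  simp only [pderivE_dmon, ite_mul, zero_mul]
  rw [Finset.sum_ite, Finset.sum_const_zero, zero_add]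
  rw [← Finset.sum_filter_of_ne (s := midx n p) (p := fun γ => ∑ j, γ j + 1 ≤ p)]
  · refine Finset.sum_nbij' (fun γ => γ - Pi.single i 1) (fun γ => γ + Pi.single i 1) ?_ ?_ ?_ ?_ ?_
    · intro γ h
      simp only [Finset.mem_filter, mem_midx] at h ⊢
      have hle : (Pi.single i 1 : Fin n → ℕ) ≤ γ := single_one_le h.2
      have hs : ∑ j, γ j = ∑ j, (γ - Pi.single i 1 : Fin n → ℕ) j + 1 := by
        conv_lhs => rw [← tsub_add_cancel_of_le hle]
        simp only [Pi.add_apply, Finset.sum_add_distrib, hsingle]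
      omega
    · intro γ h
      simp only [Finset.mem_filter, mem_midx, Pi.add_apply, Finset.sum_add_distrib,
        hsingle] at h ⊢
      simp [h.2]
    · intro γ h
      simp only [Finset.mem_filter] at h
      exact tsub_add_cancel_of_le (single_one_le h.2)
    · intro γ _
      exact add_tsub_cancel_right _ _
    · intro γ h
      simp only [Finset.mem_filter] at h
      rw [tsub_add_cancel_of_le (single_one_le h.2)]
  · intro γ _ hne
    by_contra hlt
    refine hne ?_
    rw [hc, mul_zero]
    simp only [Pi.add_apply, Finset.sum_add_distrib, hsingle]
    omega

lemma pderivE_iterate_sum {n p : ℕ} (a : EuclideanSpace ℝ (Fin n)) (i : Fin n) (k : ℕ)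
    (c : (Fin n → ℕ) → ℝ) (hc : ∀ γ, p < ∑ i, γ i → c γ = 0) :
    (pderivE i)^[k] (fun y => ∑ γ ∈ midx n p, dmon γ (fun j => y j - a j) * c γ) =
      fun y => ∑ γ ∈ midx n p, dmon γ (fun j => y j - a j) * c (γ + Pi.single i k) := by
  induction k generalizing c with
  | zero => simp
  | succ k ih =>
    rw [Function.iterate_succ_apply, pderivE_sum a c hc, ih]
    · simp only [add_assoc, ← Pi.single_add]
    · intro γ h
      apply hc
      simp only [Pi.add_apply, Finset.sum_add_distrib]
      omega

lemma pderivMulti_sum {n p : ℕ} (a : EuclideanSpace ℝ (Fin n)) (β : Fin n → ℕ)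
    (c : (Fin n → ℕ) → ℝ) (hc : ∀ γ, p < ∑ i, γ i → c γ = 0) :
    pderivMulti β (fun y => ∑ γ ∈ midx n p, dmon γ (fun j => y j - a j) * c γ) =
      fun y => ∑ γ ∈ midx n p, dmon γ (fun j => y j - a j) * c (γ + β) := by
  have key : ∀ l : List (Fin n), l.foldr (fun i g => (pderivE i)^[β i] g)
      (fun y => ∑ γ ∈ midx n p, dmon γ (fun j => y j - a j) * c γ) =
      fun y => ∑ γ ∈ midx n p, dmon γ (fun j => y j - a j) *
        c (γ + (l.map fun i => (Pi.single i (β i) : Fin n → ℕ)).sum) := by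
    intro l
    induction l with
    | nil => simp
    | cons i l ih =>
      rw [List.foldr_cons, ih]
      rw [pderivE_iterate_sum a i (β i)
        (fun γ => c (γ + (l.map fun i => (Pi.single i (β i) : Fin n → ℕ)).sum))]
      · simp only [List.map_cons, List.sum_cons, add_assoc]
      · intro γ h
        apply hc
        simp only [Pi.add_apply, Finset.sum_add_distrib]
        omega
  unfold pderivMulti
  rw [key, ← Fin.sum_univ_def, Finset.univ_sum_single]

/-! ### Combinatorial estimates -/

lemma abs_dmon_le {n : ℕ} (γ : Fin n → ℕ) (y : Fin n → ℝ) (A : ℝ) (h : ∀ i, |y i| ≤ A) :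
    |dmon γ y| ≤ A ^ (∑ i, γ i) * ∏ i, (1 / ((γ i).factorial : ℝ)) := by
  unfold dmon
  rw [Finset.abs_prod, ← Finset.prod_pow_eq_pow_sum, ← Finset.prod_mul_distrib]
  refine Finset.prod_le_prod (fun _ _ => abs_nonneg _) fun i _ => ?_
  rw [abs_div, abs_pow, Nat.abs_cast, mul_one_div]
  gcongr
  exact h i

/-- The multinomial theorem at `(1, …, 1)`: `∑_{|γ| = k} 1 / γ! = n^k / k!`. -/
lemma sum_inv_factorial (n k : ℕ) :
    ∑ γ ∈ Finset.piAntidiag (Finset.univ : Finset (Fin n)) k,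
      ∏ i, (1 / ((γ i).factorial : ℝ)) = (n : ℝ) ^ k / (k.factorial : ℝ) := by
  have h := Finset.sum_pow_eq_sum_piAntidiag (Finset.univ : Finset (Fin n)) (fun _ => (1 : ℝ)) k
  simp only [Finset.sum_const, Finset.card_univ, Fintype.card_fin, nsmul_eq_mul, mul_one, one_pow,
    Finset.prod_const_one] at h
  rw [h, Finset.sum_div]
  refine Finset.sum_congr rfl fun γ hγ => ?_
  rw [Finset.mem_piAntidiag] at hγ
  have hm := Nat.multinomial_spec Finset.univ γ
  rw [hγ.1] at hm
  have hm' : (∏ i, ((γ i).factorial : ℝ)) * (Nat.multinomial Finset.univ γ : ℝ) = k.factorial := by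
    exact_mod_cast hm
  have h1 : (∏ i, ((γ i).factorial : ℝ)) ≠ 0 :=
    Finset.prod_ne_zero_iff.2 fun i _ => Nat.cast_ne_zero.2 (Nat.factorial_ne_zero _)
  have h2 := Nat.cast_ne_zero (R := ℝ).2 (Nat.factorial_ne_zero k)
  simp only [one_div]
  rw [Finset.prod_inv_distrib, eq_div_iff h2, ← hm', inv_mul_cancel_left₀ h1]

lemma sum_pow_mul_pow_le {A B : ℝ} (hA : 0 ≤ A) (hB : 0 ≤ B) (m : ℕ) :
    ∑ k ∈ Finset.range (m + 1), A ^ k * B ^ (m - k) ≤ (A + B) ^ m := by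
  rw [add_pow]
  refine Finset.sum_le_sum fun k hk => le_mul_of_one_le_right (by positivity) ?_
  exact_mod_cast Nat.choose_pos (by simpa [Nat.lt_succ_iff] using hk)

lemma sum_midx_eq {n p : ℕ} (f : (Fin n → ℕ) → ℝ) :
    ∑ γ ∈ midx n p, f γ =
      ∑ k ∈ Finset.range (p + 1), ∑ γ ∈ Finset.piAntidiag (Finset.univ : Finset (Fin n)) k, f γ := by
  rw [← Finset.sum_fiberwise_of_maps_to (s := midx n p) (t := Finset.range (p + 1))
    (g := fun γ => ∑ i, γ i) (fun γ h => by rw [mem_midx] at h; simp; omega)]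
  refine Finset.sum_congr rfl fun k hk => Finset.sum_congr ?_ fun _ _ => rfl
  ext γ
  simp only [Finset.mem_range] at hk
  simp only [Finset.mem_filter, mem_midx, Finset.mem_piAntidiag, Finset.mem_univ, implies_true,
    and_true]
  constructor
  · exact fun h => h.2
  · exact fun h => ⟨by rw [h]; omega, h⟩

lemma factorial_coeff_le {n p a k : ℕ} (hn : 1 ≤ n) (h : a + k ≤ p) :
    (n : ℝ) ^ k / (k.factorial : ℝ) * ((a + k).factorial : ℝ) ≤
      (2 * (n : ℝ) ^ 2) ^ (p + 1) * (a.factorial : ℝ) := by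
  have hn' : (1 : ℝ) ≤ n := by exact_mod_cast hn
  have h1 : ((a + k).factorial : ℝ) = ((a + k).choose a : ℝ) * a.factorial * k.factorial := by
    exact_mod_cast (Nat.choose_symm_add (a := a) (b := k) ▸ Nat.add_choose_mul_factorial_mul_factorial a k).symm
  have h2 : ((a + k).choose a : ℝ) ≤ 2 ^ (p + 1) := by
    have : (a + k).choose a ≤ 2 ^ (p + 1) :=
      (Nat.choose_le_two_pow _ _).trans (Nat.pow_le_pow_right (by norm_num) (by omega))
    exact_mod_cast this
  have h3 : (n : ℝ) ^ k ≤ ((n : ℝ) ^ 2) ^ (p + 1) := by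
    rw [← pow_mul]
    exact pow_le_pow_right₀ hn' (by omega)
  have := Nat.cast_ne_zero (R := ℝ).2 (Nat.factorial_ne_zero k)
  calc (n : ℝ) ^ k / (k.factorial : ℝ) * ((a + k).factorial : ℝ)
      = ((a + k).choose a : ℝ) * (n : ℝ) ^ k * a.factorial := by
        rw [h1]; field_simp
    _ ≤ 2 ^ (p + 1) * ((n : ℝ) ^ 2) ^ (p + 1) * a.factorial := by gcongr
    _ = _ := by rw [mul_pow]

/-! ### The estimate for differences of Taylor polynomials -/

/-- Lemma 5.1: estimate for differences of Taylor polynomials of a Whitney jet of class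
`B^{S}` on a compact set `E ⊆ ℝ^n`. -/
theorem stmt_12 (n : ℕ) (σ S s : ℕ → ℝ)
    (hσpos : ∀ k, 0 < σ k) (hσmono : Monotone σ) (hσ0 : σ 0 = 1)
    (hS : ∀ k, S k = ∏ i ∈ Finset.range (k + 1), σ i)
    (hSws : Tendsto (fun k : ℕ => (S k) ^ (1 / (k : ℝ))) atTop atTop)
    (hσstar : ∀ j k : ℕ, 1 ≤ j → j ≤ k → σ j / j ≤ σ k / k)
    (hs : ∀ k, s k = S k / (Nat.factorial k : ℝ))
    (E : Set (EuclideanSpace ℝ (Fin n))) (hE : IsCompact E)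
    (F : (Fin n → ℕ) → EuclideanSpace ℝ (Fin n) → ℝ)
    (hFcont : ∀ α, ContinuousOn (F α) E)
    (C ρ : ℝ) (hC : 0 < C) (hρ : 1 ≤ ρ)
    (h51 : ∀ α : Fin n → ℕ, ∀ a ∈ E, |F α a| ≤ C * ρ ^ (∑ i, α i) * S (∑ i, α i))
    (h52 : ∀ p : ℕ, ∀ α : Fin n → ℕ, ∑ i, α i ≤ p → ∀ a ∈ E, ∀ b ∈ E,
      |Rrem F a p α b| ≤ C * ρ ^ (p + 1) * (Nat.factorial (∑ i, α i) : ℝ) * s (p + 1) *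
        ‖b - a‖ ^ (p + 1 - ∑ i, α i)) :
    ∀ p : ℕ, ∀ α : Fin n → ℕ, ∑ i, α i ≤ p → ∀ a₁ ∈ E, ∀ a₂ ∈ E,
      ∀ x : EuclideanSpace ℝ (Fin n),
      |pderivMulti α (fun y => Tpoly F a₁ p y - Tpoly F a₂ p y) x| ≤
        C * (2 * (n : ℝ) ^ 2 * ρ) ^ (p + 1) * (Nat.factorial (∑ i, α i) : ℝ) * s (p + 1) *
          (‖a₁ - x‖ + ‖a₁ - a₂‖) ^ (p + 1 - ∑ i, α i) := by
  intro p α hα a₁ ha₁ a₂ ha₂ x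
  rcases Nat.eq_zero_or_pos n with rfl | hn
  · -- In dimension `0` the two base points coincide and both sides vanish.
    obtain rfl : a₁ = a₂ := Subsingleton.elim _ _
    simp [pderivMulti]
  have hSpos : 0 < S (p + 1) := by
    rw [hS]; exact Finset.prod_pos fun i _ => hσpos i
  have hspos : 0 < s (p + 1) := by rw [hs]; positivity
  set K : ℝ := C * ρ ^ (p + 1) * s (p + 1) with hK
  have hK0 : 0 ≤ K := by positivity
  set A : ℝ := ‖a₁ - x‖ with hA
  set B : ℝ := ‖a₁ - a₂‖ with hB
  have hA0 : 0 ≤ A := norm_nonneg _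
  have hB0 : 0 ≤ B := norm_nonneg _
  set a : ℕ := ∑ i, α i with ha
  set m : ℕ := p + 1 - a with hm
  -- `p - |γ|` truncates in `Rrem` when `|γ| > p`, so the coefficients are cut off above order `p`.
  set c : (Fin n → ℕ) → ℝ := fun γ => if ∑ i, γ i ≤ p then Rrem F a₂ p γ a₁ else 0 with hc
  have hdiff : (fun y => Tpoly F a₁ p y - Tpoly F a₂ p y) =
      fun y => ∑ γ ∈ midx n p, dmon γ (fun j => y j - a₁ j) * c γ := by
    funext y
    rw [Tpoly_sub_Tpoly]
    refine Finset.sum_congr rfl fun γ hγ => ?_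
    rw [mem_midx] at hγ
    simp [hc, hγ]
  rw [hdiff, pderivMulti_sum a₁ α c (fun γ h => by simp [hc, h])]
  have hcoord : ∀ i, |x i - a₁ i| ≤ A := by
    intro i
    rw [hA, norm_sub_rev]
    simpa using PiLp.norm_apply_le (x - a₁) i
  have hgrp : ∀ k ∈ Finset.range (p + 1),
      ∑ γ ∈ Finset.piAntidiag (Finset.univ : Finset (Fin n)) k,
        |dmon γ (fun j => x j - a₁ j) * c (γ + α)| ≤
      if a + k ≤ p then
        K * ((2 * (n : ℝ) ^ 2) ^ (p + 1) * (a.factorial : ℝ)) * (A ^ k * B ^ (m - k)) else 0 := by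
    intro k _
    have hsum : ∀ γ ∈ Finset.piAntidiag (Finset.univ : Finset (Fin n)) k,
        ∑ i, (γ + α) i = a + k := by
      intro γ hγ
      rw [Finset.mem_piAntidiag] at hγ
      simp only [Pi.add_apply, Finset.sum_add_distrib, hγ.1]
      omega
    split_ifs with hk
    · calc ∑ γ ∈ Finset.piAntidiag (Finset.univ : Finset (Fin n)) k,
            |dmon γ (fun j => x j - a₁ j) * c (γ + α)|
          ≤ ∑ γ ∈ Finset.piAntidiag (Finset.univ : Finset (Fin n)) k,
            (∏ i, (1 / ((γ i).factorial : ℝ))) *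
              (A ^ k * (K * ((a + k).factorial : ℝ) * B ^ (m - k))) := by
            refine Finset.sum_le_sum fun γ hγ => ?_
            have h1 := abs_dmon_le γ (fun j => x j - a₁ j) A hcoord
            have h2 := h52 p (γ + α) (by rw [hsum γ hγ]; exact hk) a₂ ha₂ a₁ ha₁
            rw [hsum γ hγ] at h2
            rw [(Finset.mem_piAntidiag.1 hγ).1] at h1
            have h3 : c (γ + α) = Rrem F a₂ p (γ + α) a₁ := by
              simp only [hc]; rw [hsum γ hγ, if_pos hk]
            have h4 : p + 1 - (a + k) = m - k := by omega
            rw [h4] at h2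
            rw [abs_mul, h3]
            calc _ ≤ _ := mul_le_mul h1 h2 (abs_nonneg _) (by positivity)
              _ = _ := by rw [hK]; ring
        _ = K * ((n : ℝ) ^ k / (k.factorial : ℝ) * ((a + k).factorial : ℝ)) *
              (A ^ k * B ^ (m - k)) := by
            rw [← Finset.sum_mul, sum_inv_factorial]; ring
        _ ≤ _ := by
            exact mul_le_mul_of_nonneg_right
              (mul_le_mul_of_nonneg_left (factorial_coeff_le hn hk) hK0) (by positivity)
    · refine (Finset.sum_eq_zero fun γ hγ => ?_).le
      have h3 : c (γ + α) = 0 := by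
        simp only [hc]; rw [hsum γ hγ, if_neg hk]
      simp [h3]
  calc |∑ γ ∈ midx n p, dmon γ (fun j => x j - a₁ j) * c (γ + α)|
      ≤ ∑ γ ∈ midx n p, |dmon γ (fun j => x j - a₁ j) * c (γ + α)| :=
        Finset.abs_sum_le_sum_abs _ _
    _ ≤ ∑ k ∈ Finset.range (p + 1), if a + k ≤ p then
        K * ((2 * (n : ℝ) ^ 2) ^ (p + 1) * (a.factorial : ℝ)) * (A ^ k * B ^ (m - k)) else 0 := by
        rw [sum_midx_eq]
        exact Finset.sum_le_sum hgrp
    _ ≤ ∑ k ∈ Finset.range (m + 1),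
        K * ((2 * (n : ℝ) ^ 2) ^ (p + 1) * (a.factorial : ℝ)) * (A ^ k * B ^ (m - k)) := by
        rw [← Finset.sum_filter]
        refine Finset.sum_le_sum_of_subset_of_nonneg (fun k hk => ?_) fun _ _ _ => by positivity
        simp only [Finset.mem_filter, Finset.mem_range] at hk ⊢
        omega
    _ ≤ K * ((2 * (n : ℝ) ^ 2) ^ (p + 1) * (a.factorial : ℝ)) * (A + B) ^ m := by
        rw [← Finset.mul_sum]
        gcongr
        exact sum_pow_mul_pow_le hA0 hB0 m
    _ = _ := by rw [hK, mul_pow _ ρ]; ring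
end

section
/- Let 𝔑 be a weight matrix satisfying: for every N ∈ 𝔑 there is Ṅ ∈ 𝔑 with ν_k ≲ Ṅ_k^{1/k}. For weight sequences M, N and positive integers p, k set φ^{M,N}_{p,k} := sup_{0≤j<k} (M_k/(p^k N_j))^{1/(k−j)}. Then the following are equivalent: (a) for every N ∈ 𝔑 there exist Ṅ ∈ 𝔑 and a positive integer p such that ∑_{ℓ≥k} 1/ν̇_ℓ ≲ k/φ^{N,Ṅ}_{p,k}; (b) for every N ∈ 𝔑 there exists Ṅ ∈ 𝔑 such that ∑_{ℓ≥k} 1/ν̇_ℓ ≲ k/ν_k. -/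
/-!
Write `N`, `N₁`, `N₂` for the products of `ν`, `ν₁`, `ν₂`.

From the `φ`-condition to the `ν`-condition: pick `ν₁` with `ν_k ≲ N₁_k^{1/k}` and apply the
hypothesis to `ν₁`. The term `j = 0` of the supremum gives `φ_{p,k} ≥ N₁_k^{1/k} / p ≳ ν_k`.

Conversely, if `N_j ≤ p^j M_j` for all `j`, then `φ^{N,M}_{p,k} ≤ ν_k` because
`N_k / N_j ≤ ν_k^{k-j}`; so it suffices to find such an `M` in the matrix, with quotients `μ`,
satisfying `∑_{ℓ ≥ k} 1/μ_ℓ ≲ k/ν_k`. Take `ν₁` with `ν_k^k ≤ C₁^k N₁_k`, and `ν₂` with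
`∑_{ℓ ≥ k} 1/ν₂_ℓ ≤ C₂ k/ν₁_k`. If `N ≤ N₂`, then `M = N₂` works. Otherwise `N₂ ≤ N`, and
`M = N₁` works. In that case:

* the tail bound gives `ν₁_i ≤ C₂ ν₂_{2i-1}`, hence
  `N₁_k² ≤ N₁_{⌊k/2⌋} N₁_{⌈k/2⌉} ν₁_k^k ≤ C₂^k N₂_k ν₁_k^k`, and so `ν_k^k ≤ Y^k N₂_k` with
  `Y = C₁² C₂ ν₁_k / ν_k`;
* the indices `ℓ ≤ k + kY + 1` contribute at most `(kY + 2)/ν₁_k ≲ k/ν_k` to `∑_{ℓ ≥ k} 1/ν₁_ℓ`;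
* for `ℓ = k + n` with `n ≥ kY` one has `Y^k ≤ e^n`, and `N₂_ℓ ≤ N_ℓ ≤ N_k ν_ℓ^n` yields
  `ν₂_{k+1} ⋯ ν₂_ℓ ≤ (e C₁ ν₁_ℓ)^n`, so that `1/ν₁_ℓ` is bounded by a constant times the geometric
  mean of `1/ν₂_{k+1}, …, 1/ν₂_ℓ`. Carleman's inequality bounds the sum of these means by
  a constant times `∑_{i > k} 1/ν₂_i ≲ k/ν₁_k ≲ k/ν_k`.
-/

/-- `N_k = ν_0 ν_1 ⋯ ν_k`. -/
noncomputable def prodSeq (ν : ℕ → ℝ) (k : ℕ) : ℝ := ∏ i ∈ Finset.range (k + 1), ν i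

/-- `ν` is the quotient sequence of a weight sequence: increasing, positive, `ν_0 = 1`,
and `N_k^{1/k} → ∞` for `N_k = ν_0 ⋯ ν_k`. -/
def IsWeightSeqQ (ν : ℕ → ℝ) : Prop :=
  ν 0 = 1 ∧ Monotone ν ∧ (∀ k, 0 < ν k) ∧
    Filter.Tendsto (fun k : ℕ => (prodSeq ν k) ^ (1 / (k : ℝ))) Filter.atTop Filter.atTop

/-- `φ^{M,N}_{p,k} = sup_{0 ≤ j < k} (M_k/(p^k N_j))^{1/(k-j)}`. -/
noncomputable def phiPK (M N : ℕ → ℝ) (p k : ℕ) : ℝ :=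
  ⨆ j : Fin k, (M k / ((p : ℝ) ^ k * N (j : ℕ))) ^ (1 / ((k : ℝ) - ((j : ℕ) : ℝ)))

lemma prodSeq_zero (ν : ℕ → ℝ) : prodSeq ν 0 = ν 0 := by simp [prodSeq]

lemma prodSeq_succ (ν : ℕ → ℝ) (k : ℕ) : prodSeq ν (k + 1) = prodSeq ν k * ν (k + 1) := by
  simp [prodSeq, Finset.prod_range_succ]

lemma prodSeq_pos {ν : ℕ → ℝ} (h : ∀ k, 0 < ν k) (k : ℕ) : 0 < prodSeq ν k :=
  Finset.prod_pos fun i _ => h i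

lemma prodSeq_add (ν : ℕ → ℝ) (k n : ℕ) :
    prodSeq ν (k + n) = prodSeq ν k * ∏ i ∈ Finset.range n, ν (k + 1 + i) := by
  induction n with
  | zero => simp
  | succ n ih =>
    rw [← add_assoc, prodSeq_succ, ih, Finset.prod_range_succ, mul_assoc]
    congr 3
    ring

lemma prodSeq_add_le {ν : ℕ → ℝ} (hm : Monotone ν) (hp : ∀ k, 0 < ν k) (j n : ℕ) :
    prodSeq ν (j + n) ≤ prodSeq ν j * ν (j + n) ^ n := by
  rw [prodSeq_add]
  refine mul_le_mul_of_nonneg_left ?_ (prodSeq_pos hp j).le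
  calc ∏ i ∈ Finset.range n, ν (j + 1 + i) ≤ ∏ _i ∈ Finset.range n, ν (j + n) := by
        refine Finset.prod_le_prod (fun i _ => (hp _).le) fun i hi => hm ?_
        have := Finset.mem_range.1 hi
        omega
    _ = ν (j + n) ^ n := by simp

lemma prodSeq_le_pow {ν : ℕ → ℝ} (h0 : ν 0 = 1) (hm : Monotone ν) (hp : ∀ k, 0 < ν k) (k : ℕ) :
    prodSeq ν k ≤ ν k ^ k := by
  simpa [prodSeq_zero, h0] using prodSeq_add_le hm hp 0 k

lemma pow_le_of_le_root {x C P : ℝ} {k : ℕ} (hk : 1 ≤ k) (hx : 0 ≤ x) (hP : 0 < P)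
    (h : x ≤ C * P ^ (1 / (k : ℝ))) : x ^ k ≤ C ^ k * P := by
  calc x ^ k ≤ (C * P ^ (1 / (k : ℝ))) ^ k := pow_le_pow_left₀ hx h k
    _ = C ^ k * P := by
      rw [mul_pow, one_div, Real.rpow_inv_natCast_pow hP.le (by omega)]

/-- If `M ≤ p ^ j N`, then each term of the supremum defining `φ^{M,N}_{p,k}`, with
`M` the products of `μ`, is at most `(μ_k^{k-j})^{1/(k-j)} = μ_k`. -/
lemma phiPK_le {μ N : ℕ → ℝ} (hm : Monotone μ) (hp : ∀ k, 0 < μ k) (hN : ∀ k, 0 < N k)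
    {p : ℕ} (hp1 : 0 < p) (h : ∀ j, prodSeq μ j ≤ (p : ℝ) ^ j * N j) {k : ℕ} (hk : 1 ≤ k) :
    phiPK (prodSeq μ) N p k ≤ μ k := by
  have : Nonempty (Fin k) := ⟨⟨0, hk⟩⟩
  refine ciSup_le fun j => ?_
  obtain ⟨j, hj⟩ := j
  obtain ⟨n, rfl⟩ := Nat.exists_eq_add_of_lt hj
  have hpR : (1 : ℝ) ≤ p := by exact_mod_cast hp1
  have hpk : (0 : ℝ) < (p : ℝ) ^ (j + n + 1) := by positivity
  have e : (((j + n + 1 : ℕ) : ℝ) - (j : ℝ)) = ((n + 1 : ℕ) : ℝ) := by push_cast; ring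
  simp only [e]
  have key : prodSeq μ (j + n + 1) / ((p : ℝ) ^ (j + n + 1) * N j) ≤ μ (j + n + 1) ^ (n + 1) := by
    rw [div_le_iff₀ (mul_pos hpk (hN j)), mul_comm]
    refine (prodSeq_add_le hm hp j (n + 1)).trans ?_
    refine mul_le_mul_of_nonneg_right ((h j).trans ?_) (pow_pos (hp _) _).le
    exact mul_le_mul_of_nonneg_right (pow_le_pow_right₀ hpR (by omega)) (hN j).le
  calc _ ≤ (μ (j + n + 1) ^ (n + 1)) ^ (1 / ((n + 1 : ℕ) : ℝ)) := by
        refine Real.rpow_le_rpow ?_ key (by positivity)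
        exact (div_pos (prodSeq_pos hp _) (mul_pos hpk (hN j))).le
    _ = μ (j + n + 1) := by
      rw [one_div, Real.pow_rpow_inv_natCast (hp _).le (by omega)]

/-- The term `j = 0` of the supremum defining `φ`. -/
lemma le_phiPK {M N : ℕ → ℝ} (hM : ∀ k, 0 < M k) (hN : N 0 = 1)
    {p : ℕ} (hp1 : 0 < p) {k : ℕ} (hk : 1 ≤ k) :
    M k ^ (1 / (k : ℝ)) / p ≤ phiPK M N p k := by
  have hpR : (0 : ℝ) < p := by exact_mod_cast hp1
  have := le_ciSup (f := fun j : Fin k =>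
    (M k / ((p : ℝ) ^ k * N (j : ℕ))) ^ (1 / ((k : ℝ) - ((j : ℕ) : ℝ))))
    (Set.finite_range _).bddAbove ⟨0, hk⟩
  refine le_trans (le_of_eq ?_) this
  simp only [hN, Nat.cast_zero, sub_zero, mul_one]
  rw [Real.div_rpow (hM k).le (by positivity), one_div,
    Real.pow_rpow_inv_natCast hpR.le (by omega)]

/-- The bound `φ ≤ μ_k` turns a bound by `k/μ_k` into one by `k/φ`; positivity of `φ` is needed
because of the convention `k/0 = 0`. -/
lemma sum_le_div_phiPK {μ ν' : ℕ → ℝ} (hm : Monotone μ) (hp : ∀ k, 0 < μ k)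
    (h0' : ν' 0 = 1) (hp' : ∀ k, 0 < ν' k) {p : ℕ} (hp1 : 0 < p)
    (h : ∀ j, prodSeq μ j ≤ (p : ℝ) ^ j * prodSeq ν' j) {C : ℝ} (hC : 0 < C) {k : ℕ} (hk : 1 ≤ k)
    {S : ℝ} (hS : S ≤ C * ((k : ℝ) / μ k)) :
    S ≤ C * ((k : ℝ) / phiPK (prodSeq μ) (prodSeq ν') p k) := by
  have hpR : (0 : ℝ) < p := by exact_mod_cast hp1
  have hpos : 0 < phiPK (prodSeq μ) (prodSeq ν') p k :=
    lt_of_lt_of_le (div_pos (Real.rpow_pos_of_pos (prodSeq_pos hp k) _) hpR)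
      (le_phiPK (prodSeq_pos hp) ((prodSeq_zero ν').trans h0') hp1 hk)
  refine hS.trans (mul_le_mul_of_nonneg_left ?_ hC.le)
  exact div_le_div_of_nonneg_left (by positivity) hpos
    (phiPK_le hm hp (prodSeq_pos hp') hp1 h hk)

/-- Weighted AM-GM with weights `1, …, n`: the pointwise step in a proof of Carleman's
inequality. -/
lemma carleman_pointwise {a : ℕ → ℝ} (ha : ∀ i, 0 ≤ a i) {y : ℝ} (hy : 0 ≤ y) {n : ℕ} (hn : 1 ≤ n)
    (h : y ^ n ≤ ∏ i ∈ Finset.range n, a i) :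
    y ≤ Real.exp 1 * (1 / (n : ℝ) ^ 2 * ∑ i ∈ Finset.range n, ((i : ℝ) + 1) * a i) := by
  have hnR : (0 : ℝ) < n := by exact_mod_cast hn
  set S := ∑ i ∈ Finset.range n, ((i : ℝ) + 1) * a i with hS
  have hS0 : 0 ≤ S := Finset.sum_nonneg fun i _ => mul_nonneg (by positivity) (ha i)
  have hz : ∀ i : ℕ, 0 ≤ ((i : ℝ) + 1) * a i := fun i => mul_nonneg (by positivity) (ha i)
  have amgm : ∏ i ∈ Finset.range n, (((i : ℝ) + 1) * a i) ≤ (S / n) ^ n := by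
    have := Real.geom_mean_le_arith_mean (Finset.range n) (fun _ => (1 : ℝ))
      (fun i => ((i : ℝ) + 1) * a i) (fun _ _ => zero_le_one) (by simpa using Nat.pos_of_ne_zero (by omega))
      (fun i _ => hz i)
    simp only [Real.rpow_one, one_mul, Finset.sum_const, Finset.card_range, nsmul_eq_mul,
      mul_one] at this
    have h2 := pow_le_pow_left₀ (Real.rpow_nonneg (Finset.prod_nonneg fun i _ => hz i) _) this n
    rwa [Real.rpow_inv_natCast_pow (Finset.prod_nonneg fun i _ => hz i) (by omega)] at h2
  have fact : ∏ i ∈ Finset.range n, ((i : ℝ) + 1) = (n.factorial : ℝ) := by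
    rw [← Finset.prod_range_add_one_eq_factorial]; push_cast; rfl
  have stir : (n : ℝ) ^ n ≤ Real.exp 1 ^ n * n.factorial := by
    have := Real.pow_div_factorial_le_exp (n : ℝ) hnR.le n
    rw [div_le_iff₀ (by positivity)] at this
    rwa [← Real.exp_nat_mul, mul_one]
  have main : (n * y) ^ n ≤ (Real.exp 1 * (S / n)) ^ n := by
    calc (n * y) ^ n = (n : ℝ) ^ n * y ^ n := mul_pow _ _ _
      _ ≤ (Real.exp 1 ^ n * n.factorial) * ∏ i ∈ Finset.range n, a i := by gcongr
      _ = Real.exp 1 ^ n * ∏ i ∈ Finset.range n, (((i : ℝ) + 1) * a i) := by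
        rw [Finset.prod_mul_distrib, fact]; ring
      _ ≤ Real.exp 1 ^ n * (S / n) ^ n := by gcongr
      _ = _ := (mul_pow _ _ _).symm
  have := (pow_le_pow_iff_left₀ (by positivity) (by positivity) (by omega)).1 main
  have h3 : y ≤ Real.exp 1 * (S / n) / n := by
    rw [le_div_iff₀ hnR]; linarith
  calc y ≤ _ := h3
    _ = _ := by field_simp

/-- The summation step in Carleman's inequality. The subtracted term makes the induction work. -/
lemma carleman_sum {a : ℕ → ℝ} (ha : ∀ i, 0 ≤ a i) (K : ℕ) :
    ∑ n ∈ Finset.range K, 1 / ((n + 1 : ℕ) : ℝ) ^ 2 *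
        ∑ i ∈ Finset.range (n + 1), ((i : ℝ) + 1) * a i ≤
      2 * ∑ i ∈ Finset.range K, a i -
        2 / ((K : ℝ) + 1) * ∑ i ∈ Finset.range K, ((i : ℝ) + 1) * a i := by
  induction K with
  | zero => simp
  | succ K ih =>
    rw [Finset.sum_range_succ, Finset.sum_range_succ (fun i => a i),
      Finset.sum_range_succ (fun i : ℕ => ((i : ℝ) + 1) * a i)]
    set S := ∑ i ∈ Finset.range K, ((i : ℝ) + 1) * a i
    have hS0 : 0 ≤ S := Finset.sum_nonneg fun i _ => mul_nonneg (by positivity) (ha i)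
    have c : 1 / ((K : ℝ) + 1) ^ 2 + 2 / ((K : ℝ) + 1 + 1) ≤ 2 / ((K : ℝ) + 1) := by
      rw [div_add_div _ _ (by positivity) (by positivity),
        div_le_div_iff₀ (by positivity) (by positivity)]
      have : (0 : ℝ) ≤ K := by positivity
      nlinarith [mul_nonneg this this, mul_nonneg (mul_nonneg this this) this]
    have hT : 0 ≤ S + ((K : ℝ) + 1) * a K := add_nonneg hS0 (mul_nonneg (by positivity) (ha K))
    have h1 := mul_le_mul_of_nonneg_right c hT
    have h2 : 2 / ((K : ℝ) + 1) * (S + ((K : ℝ) + 1) * a K) = 2 / ((K : ℝ) + 1) * S + 2 * a K := by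
      field_simp
    rw [Nat.cast_add_one]
    linarith

/-- A tail bound `∑_{ℓ ≥ k} 1/ν₂_ℓ ≤ C k/ν₁_k` controls `N₁` at the halves of `k` by `N₂`
at `k`, because `ν₁_i ≤ C ν₂_{2i-1}`. -/
lemma prodSeq_half_le {ν₁ ν₂ : ℕ → ℝ} {C : ℝ} (h10 : ν₁ 0 = 1) (h20 : ν₂ 0 = 1)
    (h1p : ∀ k, 0 < ν₁ k) (h2p : ∀ k, 0 < ν₂ k) (h2m : Monotone ν₂) (hC : 0 < C)
    (hB : ∀ k : ℕ, 1 ≤ k → ∀ K : ℕ,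
      ∑ ℓ ∈ Finset.Ico k K, 1 / ν₂ ℓ ≤ C * ((k : ℝ) / ν₁ k)) (k : ℕ) :
    prodSeq ν₁ (k / 2) * prodSeq ν₁ ((k + 1) / 2) ≤ C ^ k * prodSeq ν₂ k := by
  -- Here `i + 1` is the index of `ν₁`; the `i + 1` terms with `i + 1 ≤ ℓ ≤ 2 i + 1` are all at
  -- least `1 / ν₂ m`.
  have term : ∀ i m, i + 1 + i ≤ m → ν₁ (i + 1) ≤ C * ν₂ m := by
    intro i m him
    have h1 := hB (i + 1) (by omega) (i + 1 + (i + 1))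
    have h2 : ((i + 1 : ℕ) : ℝ) * (1 / ν₂ m) ≤
        ∑ ℓ ∈ Finset.Ico (i + 1) (i + 1 + (i + 1)), 1 / ν₂ ℓ := by
      have := Finset.card_nsmul_le_sum (Finset.Ico (i + 1) (i + 1 + (i + 1)))
        (fun ℓ => 1 / ν₂ ℓ) (1 / ν₂ m) (fun ℓ hl => by
          have := Finset.mem_Ico.1 hl
          exact one_div_le_one_div_of_le (h2p _) (h2m (by omega)))
      simpa [nsmul_eq_mul] using this
    have h3 := h2.trans h1
    have hi : (0 : ℝ) < ((i + 1 : ℕ) : ℝ) := by positivity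
    have h4 : ((i + 1 : ℕ) : ℝ) * (1 / ν₂ m) ≤ ((i + 1 : ℕ) : ℝ) * (C / ν₁ (i + 1)) := by
      calc _ ≤ _ := h3
        _ = _ := by ring
    have h5 := le_of_mul_le_mul_left h4 hi
    rw [div_le_div_iff₀ (h2p _) (h1p _)] at h5
    linarith
  induction k with
  | zero => simp [prodSeq_zero, h10, h20]
  | succ k ih =>
    have e : (k + 1 + 1) / 2 = k / 2 + 1 := by omega
    rw [e, prodSeq_succ ν₁, prodSeq_succ ν₂]
    have t := term (k / 2) (k + 1) (by omega)
    have q : 0 < prodSeq ν₂ k := prodSeq_pos h2p k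
    calc _ = (prodSeq ν₁ (k / 2) * prodSeq ν₁ ((k + 1) / 2)) * ν₁ (k / 2 + 1) := by ring
      _ ≤ (C ^ k * prodSeq ν₂ k) * (C * ν₂ (k + 1)) :=
        mul_le_mul ih t (h1p _).le (by positivity)
      _ = _ := by ring

/-- The main estimate: if `N₂ ≤ N`, then `ν₁` already satisfies the tail bound relative to `ν`. -/
lemma tail_bound {ν ν₁ ν₂ : ℕ → ℝ} {C₁ C₂ : ℝ} (hC₁ : 0 < C₁) (hC₂ : 0 < C₂)
    (h00 : ν 0 = 1) (hm : Monotone ν) (hp : ∀ k, 0 < ν k)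
    (h10 : ν₁ 0 = 1) (h1m : Monotone ν₁) (h1p : ∀ k, 0 < ν₁ k)
    (h20 : ν₂ 0 = 1) (h2m : Monotone ν₂) (h2p : ∀ k, 0 < ν₂ k)
    (hA : ∀ k, 1 ≤ k → ν k ^ k ≤ C₁ ^ k * prodSeq ν₁ k)
    (hB : ∀ k : ℕ, 1 ≤ k → ∀ K : ℕ,
      ∑ ℓ ∈ Finset.Ico k K, 1 / ν₂ ℓ ≤ C₂ * ((k : ℝ) / ν₁ k))
    (hle : ∀ k, prodSeq ν₂ k ≤ prodSeq ν k) :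
    ∃ C > 0, ∀ k : ℕ, 1 ≤ k → ∀ K : ℕ,
      ∑ ℓ ∈ Finset.Ico k K, 1 / ν₁ ℓ ≤ C * ((k : ℝ) / ν k) := by
  set A := C₁ ^ 2 * C₂ with hAdef
  have hA0 : 0 < A := by positivity
  have hle1 : ∀ k, 1 ≤ k → ν k ≤ C₁ * ν₁ k := by
    intro k hk
    refine (pow_le_pow_iff_left₀ (hp k).le (mul_pos hC₁ (h1p k)).le
      (show k ≠ 0 by omega)).1 ?_
    rw [mul_pow]
    exact (hA k hk).trans (mul_le_mul_of_nonneg_left (prodSeq_le_pow h10 h1m h1p k) (by positivity))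
  have hhalf : ∀ k, prodSeq ν₁ k ^ 2 ≤ C₂ ^ k * prodSeq ν₂ k * ν₁ k ^ k := by
    intro k
    have a1 := prodSeq_add_le h1m h1p (k / 2) ((k + 1) / 2)
    have a2 := prodSeq_add_le h1m h1p ((k + 1) / 2) (k / 2)
    rw [show k / 2 + (k + 1) / 2 = k by omega] at a1
    rw [show (k + 1) / 2 + k / 2 = k by omega] at a2
    have q : 0 < prodSeq ν₁ k := prodSeq_pos h1p k
    have q' : 0 < prodSeq ν₁ (k / 2) := prodSeq_pos h1p _
    have q'' : 0 < ν₁ k := h1p k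
    calc prodSeq ν₁ k ^ 2 = prodSeq ν₁ k * prodSeq ν₁ k := sq _
      _ ≤ (prodSeq ν₁ (k / 2) * ν₁ k ^ ((k + 1) / 2)) *
          (prodSeq ν₁ ((k + 1) / 2) * ν₁ k ^ (k / 2)) := mul_le_mul a1 a2 q.le (by positivity)
      _ = (prodSeq ν₁ (k / 2) * prodSeq ν₁ ((k + 1) / 2)) * ν₁ k ^ ((k + 1) / 2 + k / 2) := by
        rw [pow_add]; ring
      _ = (prodSeq ν₁ (k / 2) * prodSeq ν₁ ((k + 1) / 2)) * ν₁ k ^ k := by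
        rw [show (k + 1) / 2 + k / 2 = k by omega]
      _ ≤ _ := mul_le_mul_of_nonneg_right
        (prodSeq_half_le h10 h20 h1p h2p h2m hC₂ hB k) (by positivity)
  have hY : ∀ k, 1 ≤ k → ν k ^ k ≤ (A * ν₁ k / ν k) ^ k * prodSeq ν₂ k := by
    intro k hk
    have q : 0 < ν k := hp k
    have q1 : 0 < prodSeq ν₁ k := prodSeq_pos h1p k
    rw [div_pow, div_mul_eq_mul_div, le_div_iff₀ (by positivity)]
    calc ν k ^ k * ν k ^ k ≤ (C₁ ^ k * prodSeq ν₁ k) * (C₁ ^ k * prodSeq ν₁ k) :=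
          mul_le_mul (hA k hk) (hA k hk) (by positivity) (by positivity)
      _ = (C₁ ^ k) ^ 2 * prodSeq ν₁ k ^ 2 := by ring
      _ ≤ (C₁ ^ k) ^ 2 * (C₂ ^ k * prodSeq ν₂ k * ν₁ k ^ k) :=
        mul_le_mul_of_nonneg_left (hhalf k) (by positivity)
      _ = (A * ν₁ k) ^ k * prodSeq ν₂ k := by
        rw [hAdef, mul_pow, mul_pow, ← pow_mul, ← pow_mul, mul_comm 2 k]; ring
  set B := Real.exp 1 * C₁ with hBdef
  have hB0 : 0 < B := by positivity
  have hfar : ∀ k n : ℕ, 1 ≤ k → 1 ≤ n → (k : ℝ) * (A * ν₁ k / ν k) ≤ n →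
      1 / ν₁ (k + n) ≤ B * Real.exp 1 * (1 / (n : ℝ) ^ 2 *
        ∑ i ∈ Finset.range n, ((i : ℝ) + 1) * (1 / ν₂ (k + 1 + i))) := by
    intro k n hk hn hkn
    set Y := A * ν₁ k / ν k with hYdef
    have hY0 : 0 < Y := div_pos (mul_pos hA0 (h1p k)) (hp k)
    have q2 : 0 < prodSeq ν₂ k := prodSeq_pos h2p k
    have qn : 0 < ν (k + n) := hp _
    have q1n : 0 < ν₁ (k + n) := h1p _
    -- The condition `k Y ≤ n` absorbs the factor `Y ^ k`.
    have hYe : Y ^ k ≤ Real.exp 1 ^ n := by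
      calc Y ^ k ≤ Real.exp Y ^ k :=
            pow_le_pow_left₀ hY0.le (by linarith [Real.add_one_le_exp Y]) k
        _ = Real.exp (k * Y) := by rw [← Real.exp_nat_mul]
        _ ≤ Real.exp n := Real.exp_le_exp.2 hkn
        _ = Real.exp 1 ^ n := by rw [← Real.exp_nat_mul, mul_one]
    have h1 : prodSeq ν₂ k * ∏ i ∈ Finset.range n, ν₂ (k + 1 + i) ≤
        prodSeq ν₂ k * (B * ν₁ (k + n)) ^ n := by
      calc _ = prodSeq ν₂ (k + n) := (prodSeq_add ν₂ k n).symm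
        _ ≤ prodSeq ν (k + n) := hle _
        _ ≤ prodSeq ν k * ν (k + n) ^ n := prodSeq_add_le hm hp k n
        _ ≤ (Y ^ k * prodSeq ν₂ k) * ν (k + n) ^ n := mul_le_mul_of_nonneg_right
          ((prodSeq_le_pow h00 hm hp k).trans (hY k hk)) (by positivity)
        _ ≤ (Real.exp 1 ^ n * prodSeq ν₂ k) * (C₁ * ν₁ (k + n)) ^ n := by
          have := hle1 (k + n) (by omega)
          gcongr
        _ = _ := by rw [hBdef, mul_pow, mul_pow, mul_pow]; ring
    have h2 := le_of_mul_le_mul_left h1 q2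
    have h3 : (1 / (B * ν₁ (k + n))) ^ n ≤ ∏ i ∈ Finset.range n, (1 / ν₂ (k + 1 + i)) := by
      rw [Finset.prod_div_distrib, div_pow, one_pow, Finset.prod_const_one]
      exact one_div_le_one_div_of_le (Finset.prod_pos fun i _ => h2p _) h2
    have h4 := carleman_pointwise (a := fun i => 1 / ν₂ (k + 1 + i))
      (fun i => (one_div_pos.2 (h2p _)).le) (by positivity) hn h3
    calc 1 / ν₁ (k + n) = B * (1 / (B * ν₁ (k + n))) := by field_simp
      _ ≤ _ := by rw [mul_assoc B]; exact mul_le_mul_of_nonneg_left h4 hB0.le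
  refine ⟨A + 2 * C₁ + B * Real.exp 1 * (2 * (C₂ * C₁)), by positivity, fun k hk K => ?_⟩
  have hkR : (1 : ℝ) ≤ k := by exact_mod_cast hk
  have q : 0 < ν k := hp k
  have q1 : 0 < ν₁ k := h1p k
  set Y := A * ν₁ k / ν k with hYdef
  have hY0 : 0 < Y := div_pos (mul_pos hA0 q1) q
  set n₀ := ⌈(k : ℝ) * Y⌉₊ with hn₀
  have hn₀l : (k : ℝ) * Y ≤ n₀ := Nat.le_ceil _
  have hn₀u : (n₀ : ℝ) ≤ k * Y + 1 := (Nat.ceil_lt_add_one (by positivity)).le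
  have hinv : 1 / ν₁ k ≤ C₁ / ν k := by
    rw [div_le_div_iff₀ q1 q]; linarith [hle1 k hk]
  set a : ℕ → ℝ := fun i => 1 / ν₂ (k + 1 + i) with hadef
  have ha : ∀ i, 0 ≤ a i := fun i => (one_div_pos.2 (h2p _)).le
  set F : ℕ → ℝ := fun n => 1 / ((n + 1 : ℕ) : ℝ) ^ 2 *
        ∑ i ∈ Finset.range (n + 1), ((i : ℝ) + 1) * a i with hF
  have hF0 : ∀ n, 0 ≤ F n := fun n => mul_nonneg (by positivity)
    (Finset.sum_nonneg fun i _ => mul_nonneg (by positivity) (ha i))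
  have hnear : ∑ n ∈ Finset.range (n₀ + 1), 1 / ν₁ (k + n) ≤ (A + 2 * C₁) * (k / ν k) := by
    calc ∑ n ∈ Finset.range (n₀ + 1), 1 / ν₁ (k + n)
        ≤ ∑ _n ∈ Finset.range (n₀ + 1), 1 / ν₁ k := Finset.sum_le_sum fun n _ =>
          one_div_le_one_div_of_le q1 (h1m (by omega))
      _ = ((n₀ : ℝ) + 1) * (1 / ν₁ k) := by simp
      _ ≤ (k * Y + 2) * (1 / ν₁ k) := mul_le_mul_of_nonneg_right (by linarith) (by positivity)
      _ = A * (k / ν k) + 2 * (1 / ν₁ k) := by rw [hYdef]; field_simp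
      _ ≤ A * (k / ν k) + 2 * (C₁ * (k / ν k)) := by
        have : C₁ / ν k ≤ C₁ * (k / ν k) := by
          rw [← mul_div_assoc]; gcongr; exact le_mul_of_one_le_right hC₁.le hkR
        linarith
      _ = _ := by ring
  have ha_sum : ∀ m, ∑ i ∈ Finset.range m, a i ≤ C₂ * C₁ * (k / ν k) := by
    intro m
    have e : ∑ i ∈ Finset.range m, a i = ∑ ℓ ∈ Finset.Ico (k + 1) (k + 1 + m), 1 / ν₂ ℓ := by
      rw [Finset.sum_Ico_eq_sum_range, Nat.add_sub_cancel_left]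
    calc _ = _ := e
      _ ≤ ∑ ℓ ∈ Finset.Ico k (k + 1 + m), 1 / ν₂ ℓ :=
        Finset.sum_le_sum_of_subset_of_nonneg (Finset.Ico_subset_Ico_left (by omega))
          fun i _ _ => (one_div_pos.2 (h2p _)).le
      _ ≤ C₂ * (k / ν₁ k) := hB k hk _
      _ = C₂ * (k * (1 / ν₁ k)) := by ring
      _ ≤ C₂ * (k * (C₁ / ν k)) := by gcongr
      _ = _ := by ring
  have hfarsum : ∑ n ∈ Finset.range K, 1 / ν₁ (k + (n₀ + 1 + n)) ≤
      B * Real.exp 1 * (2 * (C₂ * C₁)) * (k / ν k) := by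
    calc ∑ n ∈ Finset.range K, 1 / ν₁ (k + (n₀ + 1 + n))
        ≤ ∑ n ∈ Finset.range K, B * Real.exp 1 * F (n₀ + n) := by
          refine Finset.sum_le_sum fun n _ => ?_
          have := hfar k (n₀ + n + 1) hk (by omega) (by push_cast; linarith [n.cast_nonneg (α := ℝ)])
          rwa [show n₀ + 1 + n = n₀ + n + 1 by omega]
      _ = B * Real.exp 1 * ∑ n ∈ Finset.range K, F (n₀ + n) := by rw [Finset.mul_sum]
      _ ≤ B * Real.exp 1 * ∑ n ∈ Finset.range (n₀ + K), F n := by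
        rw [Finset.sum_range_add]
        have := Finset.sum_nonneg fun n (_ : n ∈ Finset.range n₀) => hF0 n
        refine mul_le_mul_of_nonneg_left (by linarith) (by positivity)
      _ ≤ B * Real.exp 1 * (2 * (C₂ * C₁ * (k / ν k))) := by
        refine mul_le_mul_of_nonneg_left ?_ (by positivity)
        have h1 := carleman_sum ha (n₀ + K)
        have h2 : 0 ≤ 2 / (((n₀ + K : ℕ) : ℝ) + 1) *
            ∑ i ∈ Finset.range (n₀ + K), ((i : ℝ) + 1) * a i := mul_nonneg (by positivity)
          (Finset.sum_nonneg fun i _ => mul_nonneg (by positivity) (ha i))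
        linarith [ha_sum (n₀ + K)]
      _ = _ := by ring
  -- Enlarging the range makes the splitting at `k + n₀ + 1` valid for every `K`.
  calc ∑ ℓ ∈ Finset.Ico k K, 1 / ν₁ ℓ
      ≤ ∑ ℓ ∈ Finset.Ico k (k + (n₀ + 1 + K)), 1 / ν₁ ℓ :=
        Finset.sum_le_sum_of_subset_of_nonneg (Finset.Ico_subset_Ico_right (by omega))
          fun i _ _ => (one_div_pos.2 (h1p _)).le
    _ = ∑ n ∈ Finset.range (n₀ + 1), 1 / ν₁ (k + n) +
        ∑ n ∈ Finset.range K, 1 / ν₁ (k + (n₀ + 1 + n)) := by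
      rw [Finset.sum_Ico_eq_sum_range, Nat.add_sub_cancel_left, Finset.sum_range_add]
    _ ≤ _ := by linarith

/-- Lemma 5.10: for a weight matrix 𝔑 satisfying (5.17), conditions (5.18) and (5.19)
are equivalent.  (The condition `∑_{ℓ ≥ k} 1/ν_ℓ ≤ C·(…)` is expressed via all partial
sums `∑_{k ≤ ℓ < K}`, which for positive terms is equivalent to convergence together
with the bound on the infinite sum.) -/
theorem stmt_17 (𝔑 : Set (ℕ → ℝ))
    (hws : ∀ ν ∈ 𝔑, IsWeightSeqQ ν)
    (htot : ∀ ν ∈ 𝔑, ∀ ν' ∈ 𝔑,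
      (∀ k, prodSeq ν k ≤ prodSeq ν' k) ∨ (∀ k, prodSeq ν' k ≤ prodSeq ν k))
    (h517 : ∀ ν ∈ 𝔑, ∃ ν' ∈ 𝔑, ∃ C > 0,
      ∀ k : ℕ, 1 ≤ k → ν k ≤ C * (prodSeq ν' k) ^ (1 / (k : ℝ))) :
    (∀ ν ∈ 𝔑, ∃ ν' ∈ 𝔑, ∃ p : ℕ, 0 < p ∧ ∃ C > 0, ∀ k : ℕ, 1 ≤ k → ∀ K : ℕ,
        ∑ ℓ ∈ Finset.Ico k K, 1 / ν' ℓ ≤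
          C * ((k : ℝ) / phiPK (prodSeq ν) (prodSeq ν') p k)) ↔
    (∀ ν ∈ 𝔑, ∃ ν' ∈ 𝔑, ∃ C > 0, ∀ k : ℕ, 1 ≤ k → ∀ K : ℕ,
        ∑ ℓ ∈ Finset.Ico k K, 1 / ν' ℓ ≤ C * ((k : ℝ) / ν k)) := by
  constructor
  · intro ha ν hν
    obtain ⟨ν₁, hν₁, C₁, hC₁, h1⟩ := h517 ν hν
    obtain ⟨ν₂, hν₂, p, hp, C, hC, h2⟩ := ha ν₁ hν₁
    obtain ⟨-, -, hp0, -⟩ := hws ν hν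
    obtain ⟨-, -, hp1, -⟩ := hws ν₁ hν₁
    obtain ⟨h20, -, -, -⟩ := hws ν₂ hν₂
    have hpR : (0 : ℝ) < p := by exact_mod_cast hp
    refine ⟨ν₂, hν₂, C * (C₁ * p), by positivity, fun k hk K => (h2 k hk K).trans ?_⟩
    have hφ := le_phiPK (N := prodSeq ν₂) (prodSeq_pos hp1) ((prodSeq_zero ν₂).trans h20) hp hk
    have q : 0 < ν k := hp0 k
    have hlow : ν k / (C₁ * p) ≤ phiPK (prodSeq ν₁) (prodSeq ν₂) p k := by
      refine le_trans ?_ hφ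
      rw [← div_div]
      gcongr
      rw [div_le_iff₀ hC₁]
      linarith [h1 k hk]
    calc C * ((k : ℝ) / phiPK (prodSeq ν₁) (prodSeq ν₂) p k)
        ≤ C * ((k : ℝ) / (ν k / (C₁ * p))) := by gcongr
      _ = C * (C₁ * p) * (k / ν k) := by field_simp
  · intro hb ν hν
    obtain ⟨ν₁, hν₁, C₁, hC₁, h1⟩ := h517 ν hν
    obtain ⟨ν₂, hν₂, C₂, hC₂, h2⟩ := hb ν₁ hν₁
    obtain ⟨h00, hm0, hp0, -⟩ := hws ν hν
    obtain ⟨h10, hm1, hp1, -⟩ := hws ν₁ hν₁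
    obtain ⟨h20, hm2, hp2, -⟩ := hws ν₂ hν₂
    have hA : ∀ k, 1 ≤ k → ν k ^ k ≤ C₁ ^ k * prodSeq ν₁ k := fun k hk =>
      pow_le_of_le_root hk (hp0 k).le (prodSeq_pos hp1 k) (h1 k hk)
    rcases htot ν hν ν₂ hν₂ with h | h
    · refine ⟨ν₂, hν₂, 1, one_pos, C₂ * C₁, by positivity, fun k hk K => ?_⟩
      refine sum_le_div_phiPK hm0 hp0 h20 hp2 one_pos (by simpa using h) (by positivity) hk ?_
      have q0 : 0 < ν k := hp0 k
      have q1 : 0 < ν₁ k := hp1 k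
      have hle : ν k ≤ C₁ * ν₁ k := by
        refine (pow_le_pow_iff_left₀ q0.le (by positivity) (show k ≠ 0 by omega)).1 ?_
        rw [mul_pow]
        exact (hA k hk).trans
          (mul_le_mul_of_nonneg_left (prodSeq_le_pow h10 hm1 hp1 k) (by positivity))
      calc _ ≤ C₂ * ((k : ℝ) / ν₁ k) := h2 k hk K
        _ ≤ C₂ * (C₁ * (k / ν k)) := by
          refine mul_le_mul_of_nonneg_left ?_ hC₂.le
          rw [← mul_div_assoc, div_le_div_iff₀ q1 q0]
          have : (0 : ℝ) ≤ k := by positivity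
          nlinarith [mul_le_mul_of_nonneg_left hle this]
        _ = _ := by ring
    · obtain ⟨C, hC, h3⟩ :=
        tail_bound hC₁ hC₂ h00 hm0 hp0 h10 hm1 hp1 h20 hm2 hp2 hA h2 h
      obtain ⟨p, hp⟩ := exists_nat_ge (max C₁ 1)
      have hpC : C₁ ≤ p := (le_max_left _ _).trans hp
      have hp1' : 0 < p := by
        have : (1 : ℝ) ≤ p := (le_max_right _ _).trans hp
        exact_mod_cast this
      refine ⟨ν₁, hν₁, p, hp1', C, hC, fun k hk K => ?_⟩
      refine sum_le_div_phiPK hm0 hp0 h10 hp1 hp1' (fun j => ?_) hC hk (h3 k hk K)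
      rcases Nat.eq_zero_or_pos j with rfl | hj
      · simp [prodSeq_zero, h00, h10]
      · have q := prodSeq_pos hp1 j
        calc prodSeq ν j ≤ ν j ^ j := prodSeq_le_pow h00 hm0 hp0 j
          _ ≤ C₁ ^ j * prodSeq ν₁ j := hA j hj
          _ ≤ (p : ℝ) ^ j * prodSeq ν₁ j := by gcongr
end

section
/- Let s > 1, r := s/(s−1), C_s := (s−1)s^{−r}, and for ρ > 0 define W^{s,ρ}_k := exp(C_s ρ^{r−1} k^r) and ϑ^{s,ρ}_k := W^{s,ρ}_k / W^{s,ρ}_{k−1} for k ≥ 1. Then: (1) for every ρ > 0 there is a constant C > 0 such that ∑_{ℓ≥k} 1/ϑ^{s,ρ}_ℓ ≤ C k/ϑ^{s,ρ}_k for all k ≥ 1; (2) if s ≥ 2, then there is a constant C > 0 such that ϑ^{s,ρ}_{k+1} ≤ C ϑ^{s,ρ}_k for all k ≥ 1; (3) for all ρ > 0 and all k ≥ 1, ϑ^{s,ρ}_{k+1} ≤ (W^{s,6ρ}_k)^{1/k}. -/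
/-!
Write `p = r - 1 = 1 / (s - 1) > 0` and `A = C_s ρ ^ p > 0`, so that
`log θ_k = A (k ^ r - (k - 1) ^ r)`. Since `x ↦ x ^ r` lies above its tangent lines
(`rpow_tangent_le`, a form of Bernoulli's inequality), the increment `k ^ r - (k - 1) ^ r` lies
between `r (k - 1) ^ p` and `r k ^ p`. The three claims then follow.

* (1) For `ℓ > k`, `log θ_ℓ - log θ_k ≥ A r ((ℓ - 1) ^ p - k ^ p) ≥ A r (t ^ p - 1)` with
  `t = (ℓ - 1) / k ≥ 1`, and `A r t ^ p` dominates `2 log t` up to a constant. Hence `θ_ℓ / ℓ ^ 2`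
  is almost increasing (`exp_neg_increment_le`), and the sum is controlled by
  `∑_{ℓ ≥ k} ℓ ^ (-2) ≤ 2 / k`.
* (2) If `s ≥ 2` then `p ≤ 1`, so `x ↦ x ^ p` is subadditive and
  `(k + 1) ^ p - (k - 1) ^ p ≤ 2 ^ p` bounds the second differences of `k ^ r`.
* (3) Taking logarithms, the claim is `(k + 1) ^ r - k ^ r ≤ 6 ^ p k ^ p`. Convexity on the segment
  from `1` to `2` gives `(1 + 1 / k) ^ r - 1 ≤ (2 ^ r - 1) / k`, and
  `2 ^ r - 1 = 2 * 2 ^ p - 1 ≤ 4 ^ p ≤ 6 ^ p` because `(2 ^ p - 1) ^ 2 ≥ 0`.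
-/

/-- The graph of `x ↦ x ^ r` lies above its tangent line at `b`. -/
lemma rpow_tangent_le {r p a b : ℝ} (hrp : r = p + 1) (hp : 0 < p) (ha : 0 ≤ a) (hb : 0 ≤ b) :
    b ^ r + r * b ^ p * (a - b) ≤ a ^ r := by
  rcases hb.eq_or_lt with rfl | hb
  · rw [Real.zero_rpow (by linarith), Real.zero_rpow hp.ne']
    simpa using Real.rpow_nonneg ha r
  have h1 : -1 ≤ a / b - 1 := by
    have : 0 ≤ a / b := by positivity
    linarith
  have h2 := one_add_mul_self_le_rpow_one_add h1 (p := r) (by linarith)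
  have h3 : (1 + (a / b - 1)) ^ r = a ^ r / b ^ r := by
    rw [add_sub_cancel, Real.div_rpow ha hb.le]
  have hbr : 0 < b ^ r := Real.rpow_pos_of_pos hb r
  rw [h3, le_div_iff₀ hbr] at h2
  have h4 : b ^ r = b ^ p * b := by rw [hrp, Real.rpow_add_one hb.ne']
  have h5 : (1 + r * (a / b - 1)) * b ^ r = b ^ r + r * b ^ p * (a - b) := by
    rw [h4]; field_simp
  linarith

/-- With `θ x = exp (A (x ^ r - (x - 1) ^ r))`, the quotient `θ x / x ^ 2` is almost increasing
along steps of length `0` or at least `1`. -/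
lemma exp_neg_increment_le {r p A : ℝ} (hrp : r = p + 1) (hp : 0 < p) (hA : 0 < A) :
    ∃ D > 0, ∀ x y : ℝ, 1 ≤ x → (y = x ∨ x + 1 ≤ y) →
      Real.exp (-(A * (y ^ r - (y - 1) ^ r))) ≤
        D * (x ^ 2 / y ^ 2) * Real.exp (-(A * (x ^ r - (x - 1) ^ r))) := by
  have hr0 : 0 < r := by linarith
  -- `log u ≤ u - 1` at `u = q * t ^ p` yields `2 log t ≤ A r t ^ p + const` for this `q`.
  set q := A * r * p / 2 with hq
  have hq0 : 0 < q := by positivity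
  set B := A * r + 2 * Real.log 2 + (2 / p) * (-1 - Real.log q) with hB
  refine ⟨Real.exp |B|, Real.exp_pos _, fun x y hx hxy => ?_⟩
  have hx0 : 0 < x := by linarith
  rcases hxy with rfl | hxy
  · rw [div_self (by positivity), mul_one]
    exact le_mul_of_one_le_left (Real.exp_pos _).le (Real.one_le_exp (abs_nonneg B))
  have hy0 : 0 < y := by linarith
  have e1 : x ^ 2 / y ^ 2 = Real.exp (2 * Real.log x - 2 * Real.log y) := by
    rw [Real.exp_sub, mul_comm 2, mul_comm 2, Real.exp_mul, Real.exp_mul, Real.exp_log hx0,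
      Real.exp_log hy0]
    norm_cast
  rw [e1, ← Real.exp_add, ← Real.exp_add, Real.exp_le_exp]
  have hlow := rpow_tangent_le hrp hp (a := y) (b := y - 1) hy0.le (by linarith)
  have hup := rpow_tangent_le hrp hp (a := x - 1) (b := x) (by linarith) hx0.le
  set t := (y - 1) / x with ht
  have ht1 : 1 ≤ t := by rw [ht, le_div_iff₀ hx0]; linarith
  have ht0 : 0 < t := by linarith
  have hyt : y - 1 = t * x := by rw [ht]; field_simp
  have hyp : (y - 1) ^ p = t ^ p * x ^ p := by rw [hyt, Real.mul_rpow ht0.le hx0.le]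
  have hxp : 1 ≤ x ^ p := Real.one_le_rpow hx hp.le
  have htp : 1 ≤ t ^ p := Real.one_le_rpow ht1 hp.le
  have hgap : t ^ p - 1 ≤ (y - 1) ^ p - x ^ p := by
    rw [hyp]; nlinarith
  have hinc : A * (r * (t ^ p - 1)) ≤
      A * ((y ^ r - (y - 1) ^ r) - (x ^ r - (x - 1) ^ r)) := by
    apply mul_le_mul_of_nonneg_left _ hA.le
    have := mul_le_mul_of_nonneg_left hgap hr0.le
    nlinarith
  have hlogt : 2 * Real.log t ≤ A * r * t ^ p + (2 / p) * (-1 - Real.log q) := by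
    have h1 := Real.log_le_sub_one_of_pos (x := q * t ^ p) (by positivity)
    rw [Real.log_mul hq0.ne' (by positivity), Real.log_rpow ht0] at h1
    have h2 : p * Real.log t ≤ q * t ^ p + (-1 - Real.log q) := by linarith
    have h3 := mul_le_mul_of_nonneg_left h2 (show 0 ≤ 2 / p by positivity)
    have h4 : 2 / p * (p * Real.log t) = 2 * Real.log t := by field_simp
    have h5 : 2 / p * (q * t ^ p + (-1 - Real.log q)) =
        A * r * t ^ p + (2 / p) * (-1 - Real.log q) := by
      rw [hq]; field_simp
    linarith
  have hlogy : Real.log y ≤ Real.log 2 + (Real.log t + Real.log x) := by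
    rw [← Real.log_mul ht0.ne' hx0.ne', ← hyt, ← Real.log_mul (by norm_num) (by linarith)]
    exact Real.log_le_log hy0 (by linarith)
  have := le_abs_self B
  nlinarith

/-- Second differences of `x ^ r` are bounded for `1 < r ≤ 2`. -/
lemma second_difference_le {r p x : ℝ} (hrp : r = p + 1) (hp : 0 < p) (hp1 : p ≤ 1) (hx : 1 ≤ x) :
    (x + 1) ^ r - x ^ r ≤ r * 2 ^ p + (x ^ r - (x - 1) ^ r) := by
  have h1 := rpow_tangent_le hrp hp (a := x) (b := x + 1) (by linarith) (by linarith)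
  have h2 := rpow_tangent_le hrp hp (a := x) (b := x - 1) (by linarith) (by linarith)
  have h3 := Real.rpow_add_le_add_rpow (a := x - 1) (b := 2) (p := p) (by linarith) (by norm_num)
    hp.le hp1
  rw [show x - 1 + 2 = x + 1 by ring] at h3
  have h4 := mul_le_mul_of_nonneg_left h3 (show 0 ≤ r by linarith)
  nlinarith

lemma increment_le_six_rpow {r p x : ℝ} (hrp : r = p + 1) (hp : 0 < p) (hx : 1 ≤ x) :
    (x + 1) ^ r - x ^ r ≤ 6 ^ p * x ^ p := by
  have hx0 : 0 < x := by linarith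
  have hc := (convexOn_rpow (p := r) (by linarith)).2 (Set.mem_Ici.2 zero_le_one)
    (Set.mem_Ici.2 zero_le_two) (show 0 ≤ 1 - 1 / x by rw [sub_nonneg, div_le_one hx0]; exact hx)
    (show 0 ≤ 1 / x by positivity) (by ring)
  simp only [smul_eq_mul, Real.one_rpow, mul_one] at hc
  have h1 : (1 - 1 / x + 1 / x * 2) = (x + 1) / x := by field_simp; ring
  have hxr : 0 < x ^ r := Real.rpow_pos_of_pos hx0 r
  rw [h1, Real.div_rpow (by linarith) hx0.le, div_le_iff₀ hxr] at hc
  have h2 : x ^ r = x ^ p * x := by rw [hrp, Real.rpow_add_one hx0.ne']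
  have h3 : (2 : ℝ) ^ r = 2 ^ p * 2 := by rw [hrp, Real.rpow_add_one (by norm_num)]
  have h4 : (1 - 1 / x + 1 / x * 2 ^ r) * x ^ r = x ^ r + (2 ^ r - 1) * x ^ p := by
    rw [h2]; field_simp; ring
  have h5 : (2 : ℝ) ^ r - 1 ≤ 6 ^ p := by
    have h6 : (4 : ℝ) ^ p = 2 ^ p * 2 ^ p := by
      rw [← Real.mul_rpow (by norm_num) (by norm_num)]; norm_num
    have h7 : (4 : ℝ) ^ p ≤ 6 ^ p :=
      Real.rpow_le_rpow (by norm_num) (by norm_num) hp.le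
    nlinarith [sq_nonneg ((2 : ℝ) ^ p - 1)]
  have h8 := mul_le_mul_of_nonneg_right h5 (Real.rpow_nonneg hx0.le p)
  linarith

/-- Proposition 5.14 (1)–(3): properties of the weight sequences
`W^{s,ρ}_k = exp(C_s ρ^{r-1} k^r)` associated with the weight function
`ω_s(t) = max{0, (log t)^s}`, where `r = s/(s-1)` and `C_s = (s-1)s^{-r}`. -/
theorem stmt_19 (s r Cs : ℝ) (hs : 1 < s)
    (hr : r = s / (s - 1)) (hCs : Cs = (s - 1) * s ^ (-r))
    (W : ℝ → ℕ → ℝ) (hW : ∀ ρ : ℝ, ∀ k : ℕ, W ρ k = Real.exp (Cs * ρ ^ (r - 1) * (k : ℝ) ^ r))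
    (θ : ℝ → ℕ → ℝ) (hθ : ∀ ρ : ℝ, ∀ k : ℕ, θ ρ k = W ρ k / W ρ (k - 1)) :
    -- (1) strong non-quasianalyticity: ∑_{ℓ ≥ k} 1/ϑ^{s,ρ}_ℓ ≤ C k / ϑ^{s,ρ}_k,
    --     expressed via all partial sums ∑_{k ≤ ℓ < K}.
    (∀ ρ : ℝ, 0 < ρ → ∃ C > 0, ∀ k : ℕ, 1 ≤ k → ∀ K : ℕ,
      ∑ ℓ ∈ Finset.Ico k K, 1 / θ ρ ℓ ≤ C * ((k : ℝ) / θ ρ k)) ∧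
    -- (2) if s ≥ 2 then ϑ^{s,ρ}_{k+1} ≲ ϑ^{s,ρ}_k.
    (2 ≤ s → ∀ ρ : ℝ, 0 < ρ → ∃ C > 0, ∀ k : ℕ, 1 ≤ k → θ ρ (k + 1) ≤ C * θ ρ k) ∧
    -- (3) ϑ^{s,ρ}_{k+1} ≤ (W^{s,6ρ}_k)^{1/k}.
    (∀ ρ : ℝ, 0 < ρ → ∀ k : ℕ, 1 ≤ k → θ ρ (k + 1) ≤ (W (6 * ρ) k) ^ (1 / (k : ℝ))) := by
  have hs1 : 0 < s - 1 := by linarith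
  obtain ⟨p, hp⟩ : ∃ p, p = 1 / (s - 1) := ⟨_, rfl⟩
  have hp0 : 0 < p := by rw [hp]; positivity
  have hrp : r = p + 1 := by rw [hr, hp]; field_simp; ring
  have hr1 : r - 1 = p := by linarith
  have hC0 : 0 < Cs := by rw [hCs]; positivity
  have hθ' : ∀ ρ : ℝ, ∀ k : ℕ, 1 ≤ k →
      θ ρ k = Real.exp (Cs * ρ ^ p * ((k : ℝ) ^ r - ((k : ℝ) - 1) ^ r)) := by
    intro ρ k hk
    rw [hθ, hW, hW, ← Real.exp_sub, hr1, Nat.cast_sub hk, Nat.cast_one]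
    ring_nf
  refine ⟨fun ρ hρ => ?_, fun hs2 ρ hρ => ?_, fun ρ hρ k hk => ?_⟩
  · obtain ⟨D, hD, h⟩ := exp_neg_increment_le hrp hp0 (A := Cs * ρ ^ p) (by positivity)
    refine ⟨D * 2, by positivity, fun k hk K => ?_⟩
    have hk1 : (1 : ℝ) ≤ k := by exact_mod_cast hk
    have hk0 : (0 : ℝ) < k := by linarith
    have hpos : 0 < θ ρ k := by rw [hθ' ρ k hk]; exact Real.exp_pos _
    have hsum : ∑ ℓ ∈ Finset.Ico k K, ((ℓ : ℝ) ^ 2)⁻¹ ≤ 2 / k := by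
      have := sum_Ioo_inv_sq_le (α := ℝ) (k - 1) K
      rw [Nat.cast_sub hk, Nat.cast_one, sub_add_cancel] at this
      have hI : Finset.Ico k K = Finset.Ioo (k - 1) K := by
        ext i
        simp only [Finset.mem_Ico, Finset.mem_Ioo]
        omega
      rwa [hI]
    calc ∑ ℓ ∈ Finset.Ico k K, 1 / θ ρ ℓ
        ≤ ∑ ℓ ∈ Finset.Ico k K, D * (k : ℝ) ^ 2 / θ ρ k * ((ℓ : ℝ) ^ 2)⁻¹ := by
          refine Finset.sum_le_sum fun ℓ hℓ => ?_
          have hkl := (Finset.mem_Ico.mp hℓ).1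
          have h1 := h k ℓ hk1 (by
            rcases hkl.eq_or_lt with e | e
            · left; rw [e]
            · right; exact_mod_cast e)
          rw [Real.exp_neg, Real.exp_neg, ← hθ' ρ k hk, ← hθ' ρ ℓ (hk.trans hkl)] at h1
          calc 1 / θ ρ ℓ = (θ ρ ℓ)⁻¹ := one_div _
            _ ≤ _ := h1
            _ = _ := by ring
      _ = D * (k : ℝ) ^ 2 / θ ρ k * ∑ ℓ ∈ Finset.Ico k K, ((ℓ : ℝ) ^ 2)⁻¹ := by
          rw [Finset.mul_sum]
      _ ≤ D * (k : ℝ) ^ 2 / θ ρ k * (2 / k) :=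
          mul_le_mul_of_nonneg_left hsum (by positivity)
      _ = D * 2 * ((k : ℝ) / θ ρ k) := by field_simp
  · have hp1 : p ≤ 1 := by rw [hp, div_le_one hs1]; linarith
    refine ⟨Real.exp (Cs * ρ ^ p * (r * 2 ^ p)), Real.exp_pos _, fun k hk => ?_⟩
    have hk1 : (1 : ℝ) ≤ k := by exact_mod_cast hk
    rw [hθ' ρ k hk, hθ' ρ (k + 1) (by omega), ← Real.exp_add, Real.exp_le_exp, ← mul_add]
    apply mul_le_mul_of_nonneg_left _ (by positivity)
    push_cast
    rw [add_sub_cancel_right]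
    exact second_difference_le hrp hp0 hp1 hk1
  · have hk1 : (1 : ℝ) ≤ k := by exact_mod_cast hk
    have hk0 : (0 : ℝ) < k := by linarith
    rw [hθ' ρ (k + 1) (by omega), hW, ← Real.exp_mul, Real.exp_le_exp, hr1,
      Real.mul_rpow (by norm_num) hρ.le]
    have e : Cs * (6 ^ p * ρ ^ p) * (k : ℝ) ^ r * (1 / k) = Cs * ρ ^ p * (6 ^ p * (k : ℝ) ^ p) := by
      rw [hrp, Real.rpow_add_one hk0.ne']; field_simp
    rw [e]
    apply mul_le_mul_of_nonneg_left _ (by positivity)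
    push_cast
    rw [add_sub_cancel_right]
    exact increment_le_six_rpow hrp hp0 hk1
end
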